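/- Let 0<u_-<u_+<1 with u_-+u_+>1. The sequence of functionals {G_ℓ^+}_{ℓ>0} on X^+ is equi-coercive and Γ-converges to G^+ as ℓ→∞. In particular, the unique minimizer (ū_ℓ^+, φ̄_ℓ^+) of G_ℓ^+ converges in X^+ to the unique minimizer (ū^+, φ̄^+) of G^+ as ℓ→∞. -/

import Mathlib

/-!
With `H(φ) = φ - 2 log (1 + e^φ)` the integrand splits as
`g(u,φ,p) - g(u₊,φ₊,0) = ent(u,φ) + s(p) + (H(φ) - H(φ₊))`, where `ent(u,φ) ≥ 0` is the relative
entropy of `u` with respect to the sigmoid of `φ`. Since `H(s'(v)) = log (v(1-v))` and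
`u₋ + u₊ > 1`, the potential `H - H(φ₊)` is bounded below by `c (φ₊ - φ)` on `[φ₋,φ₊]`. The only
negative term is `s(φ')`, and it is absorbed by a calibration: Fenchel duality gives
`s(p) ≥ p t - e^t` for every `t`, and `t = log (c (φ₊ - φ) / 2)` yields
`∫ ent + (c/2) ∫ (φ₊ - φ) + F(φ₊ - φ(b)) - F(φ₊ - φ(a)) ≤ energy on (a,b)` with the continuous
function `F(y) = y - y log (c y / 2)`, `F(0) = 0` (`cal`).

* Equi-coercivity: a bound on the energy bounds `∫ (φ₊ - φ)`, hence `φ₊ - φ(x) ≤ M / x`, and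
  compactness of monotone Lipschitz functions and of `L^∞(ℝ₊;[0,1])` does the rest.
* Lower bound: on `(0,L)` the entropies are linearised at the limit, up to an error `δ`
  (`exists_slope`), and the energy on `(L,ℓ)` is at least `-F(φ₊ - φ_ℓ(L))` by calibration. This
  also shows that a finite lower limit puts `(u,φ)` in the domain of the limit functional.
* Upper bound: `φ` is lifted to `φ₊` along a ramp of slope one ending at `ℓ`, and `u` is replaced
  by `u₊` there; the cost is at most `(φ₊ - φ₋) (φ₊ - φ(ℓ - (φ₊ - φ₋)))`, which tends to zero.
* Minimizers: the stationary equation is the Riccati equation `w' = κ - w²` for `w = ū - 1/2`.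
  Linear Grönwall inequalities give `0 ≤ κ - a² ≤ C/ℓ` with `a = u₊ - 1/2`, and then
  `0 ≤ w - z ≤ C'/ℓ` for the half-line profile `z' = a² - z²` (`riccati_compare`).
-/

open MeasureTheory Real Filter Topology Set
open scoped Classical

noncomputable section

/-- Bernoulli entropy `s(p) = p log p + (1-p) log (1-p)` (with `0 log 0 = 0`). -/
def S (p : ℝ) : ℝ := p * Real.log p + (1 - p) * Real.log (1 - p)

/-- The integrand `g(u,φ,p) = s(u) + s(p) + (1-u)φ - log(1+e^φ)`. -/
def gg (u φ p : ℝ) : ℝ := S u + S p + (1 - u) * φ - Real.log (1 + Real.exp φ)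

/-- The chemical potential `s'(v) = log (v/(1-v))`. -/
def phiOf (v : ℝ) : ℝ := Real.log (v / (1 - v))

/-- The step function `θ_{a₋,a₊}`. -/
def theta (am ap x : ℝ) : ℝ := if x < 0 then am else ap

/-- Translation by `z`: `(τ_z f)(x) = f(x-z)`. -/
def tau (z : ℝ) (f : ℝ → ℝ) : ℝ → ℝ := fun x => f (x - z)

/-- Membership in `L^∞(ℝ;[0,1])`. -/
def MemU (u : ℝ → ℝ) : Prop := Measurable u ∧ ∀ x, u x ∈ Icc (0:ℝ) 1

/-- Membership in `L^∞(ℝ₊;[0,1])`. -/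
def MemUplus (u : ℝ → ℝ) : Prop := Measurable u ∧ ∀ x, 0 ≤ x → u x ∈ Icc (0:ℝ) 1

/-- The class `C`: absolutely continuous with `0 ≤ φ' ≤ 1` a.e. (equivalently nondecreasing
and 1-Lipschitz) with limits `pm` at `-∞` and `pp` at `+∞`. -/
def MemC (pm pp : ℝ) (φ : ℝ → ℝ) : Prop :=
  (∀ x y : ℝ, x ≤ y → φ x ≤ φ y ∧ φ y - φ x ≤ y - x) ∧
  Tendsto φ atBot (𝓝 pm) ∧ Tendsto φ atTop (𝓝 pp)

/-- The class `C⁺` on the half line. -/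
def MemCplus (pm pp : ℝ) (φ : ℝ → ℝ) : Prop :=
  (∀ x y : ℝ, 0 ≤ x → x ≤ y → φ x ≤ φ y ∧ φ y - φ x ≤ y - x) ∧
  φ 0 = pm ∧ Tendsto φ atTop (𝓝 pp)

/-- Membership in `X = L^∞(ℝ;[0,1]) × C`. -/
def MemX (um up : ℝ) (u φ : ℝ → ℝ) : Prop := MemU u ∧ MemC (phiOf um) (phiOf up) φ

/-- Membership in `X⁺ = L^∞(ℝ₊;[0,1]) × C⁺`. -/
def MemXplus (um up : ℝ) (u φ : ℝ → ℝ) : Prop :=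
  MemUplus u ∧ MemCplus (phiOf um) (phiOf up) φ

/-- The finite volume functional `G_ℓ` on the symmetric interval `(-ℓ,ℓ)`. -/
def Gl (um up l : ℝ) (u φ : ℝ → ℝ) : EReal :=
  if (∀ x ≤ -l, u x = um ∧ φ x = phiOf um) ∧ (∀ x, l ≤ x → u x = up ∧ φ x = phiOf up) then
    (↑(∫ x in Ioo (-l) l, (gg (u x) (φ x) (deriv φ x) - gg up (phiOf up) 0)) : EReal)
  else ⊤

/-- The finite volume functional `G_ℓ⁺` on `(0,ℓ)`. -/
def Glplus (um up l : ℝ) (u φ : ℝ → ℝ) : EReal :=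
  if (∀ x, l ≤ x → u x = up ∧ φ x = phiOf up) then
    (↑(∫ x in Ioo (0:ℝ) l, (gg (u x) (φ x) (deriv φ x) - gg up (phiOf up) 0)) : EReal)
  else ⊤

/-- The infinite volume functional `G` on the whole line, `+∞` off its domain `D`. -/
def GE (um up : ℝ) (u φ : ℝ → ℝ) : EReal :=
  if Integrable (fun x => (u x - theta um up x)^2) volume ∧
      Integrable (fun x => φ x - theta (phiOf um) (phiOf up) x) volume then
    (↑(∫ x, (gg (u x) (φ x) (deriv φ x) - gg up (phiOf up) 0)) : EReal)
  else ⊤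

/-- The infinite volume functional `G⁺` on the half line, `+∞` off its domain `D⁺`. -/
def GEplus (um up : ℝ) (u φ : ℝ → ℝ) : EReal :=
  if IntegrableOn (fun x => (u x - up)^2) (Ioi 0) volume ∧
      IntegrableOn (fun x => φ x - phiOf up) (Ioi 0) volume then
    (↑(∫ x in Ioi (0:ℝ), (gg (u x) (φ x) (deriv φ x) - gg up (phiOf up) 0)) : EReal)
  else ⊤

/-- Convergence of sequences in `X`: weak* in `L^∞(ℝ;[0,1])` and uniform for `φ`. -/
def ConvX (un φn : ℕ → ℝ → ℝ) (u φ : ℝ → ℝ) : Prop :=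
  (∀ f : ℝ → ℝ, Integrable f volume →
    Tendsto (fun n => ∫ x, un n x * f x) atTop (𝓝 (∫ x, u x * f x))) ∧
  TendstoUniformly φn φ atTop

/-- Convergence of families indexed by `ℓ → ∞` in `X`. -/
def ConvXFam (U Φ : ℝ → ℝ → ℝ) (u φ : ℝ → ℝ) : Prop :=
  (∀ f : ℝ → ℝ, Integrable f volume →
    Tendsto (fun l => ∫ x, U l x * f x) atTop (𝓝 (∫ x, u x * f x))) ∧
  TendstoUniformly Φ φ atTop

/-- Convergence of sequences in `X⁺`. -/
def ConvXplus (un φn : ℕ → ℝ → ℝ) (u φ : ℝ → ℝ) : Prop :=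
  (∀ f : ℝ → ℝ, IntegrableOn f (Ioi 0) volume →
    Tendsto (fun n => ∫ x in Ioi (0:ℝ), un n x * f x) atTop
      (𝓝 (∫ x in Ioi (0:ℝ), u x * f x))) ∧
  TendstoUniformlyOn φn φ atTop (Ici 0)

/-- Convergence of families indexed by `ℓ → ∞` in `X⁺`. -/
def ConvXplusFam (U Φ : ℝ → ℝ → ℝ) (u φ : ℝ → ℝ) : Prop :=
  (∀ f : ℝ → ℝ, IntegrableOn f (Ioi 0) volume →
    Tendsto (fun l => ∫ x in Ioi (0:ℝ), U l x * f x) atTop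
      (𝓝 (∫ x in Ioi (0:ℝ), u x * f x))) ∧
  TendstoUniformlyOn Φ φ atTop (Ici 0)

/-- The standing wave `ū(x) = 1/2 + (u₊ - 1/2) tanh((u₊ - 1/2) x)`. -/
def ubarStanding (up : ℝ) (x : ℝ) : ℝ :=
  1/2 + (up - 1/2) * Real.tanh ((up - 1/2) * x)

/-! ### Entropy, Fenchel duality and the potential well -/

/-- The log-partition function `L(t) = log (1 + e^t)`, the Legendre dual of the entropy `S`. -/
def LL (t : ℝ) : ℝ := Real.log (1 + Real.exp t)

lemma LL_arg_pos (t : ℝ) : 0 < 1 + Real.exp t := by positivity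

lemma log_sigmoid (t : ℝ) : Real.log (sigmoid t) = t - LL t := by
  have h : sigmoid t = Real.exp t / (1 + Real.exp t) := by
    rw [sigmoid_def, Real.exp_neg]; field_simp; ring
  rw [h, Real.log_div (by positivity) (by positivity), Real.log_exp, LL]

lemma log_one_sub_sigmoid (t : ℝ) : Real.log (1 - sigmoid t) = - LL t := by
  have h : 1 - sigmoid t = (1 + Real.exp t)⁻¹ := by
    rw [← sigmoid_neg, sigmoid_def, neg_neg]
  rw [h, Real.log_inv, LL]

lemma mul_log_sub_le {q v : ℝ} (hq : 0 ≤ q) (hv : 0 < v) :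
    q * Real.log v - q * Real.log q ≤ v - q := by
  rcases hq.eq_or_lt with rfl | hq
  · simp [hv.le]
  · have h := Real.log_le_sub_one_of_pos (div_pos hv hq)
    rw [Real.log_div hv.ne' hq.ne'] at h
    have := mul_le_mul_of_nonneg_left h hq.le
    have e : q * (v / q - 1) = v - q := by field_simp
    linarith

/-- Gibbs' inequality for Bernoulli laws. -/
lemma gibbs {q v : ℝ} (hq : q ∈ Icc (0:ℝ) 1) (hv : v ∈ Ioo (0:ℝ) 1) :
    q * Real.log v + (1 - q) * Real.log (1 - v) ≤ S q := by
  have h1 := mul_log_sub_le hq.1 hv.1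
  have h2 := mul_log_sub_le (q := 1 - q) (v := 1 - v) (by linarith [hq.2]) (by linarith [hv.2])
  unfold S; linarith

/-- The Fenchel-Young inequality between `S` and `LL`. -/
lemma S_ge {q : ℝ} (hq : q ∈ Icc (0:ℝ) 1) (t : ℝ) : q * t - LL t ≤ S q := by
  have := gibbs hq ⟨sigmoid_pos t, sigmoid_lt_one t⟩
  rw [log_sigmoid, log_one_sub_sigmoid] at this
  linarith

lemma LL_phiOf {v : ℝ} (hv : v ∈ Ioo (0:ℝ) 1) : LL (phiOf v) = - Real.log (1 - v) := by
  have h1 : 0 < 1 - v := by linarith [hv.2]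
  unfold LL phiOf
  rw [Real.exp_log (div_pos hv.1 h1), ← Real.log_inv]
  congr 1; field_simp; ring

lemma phiOf_eq {v : ℝ} (hv : v ∈ Ioo (0:ℝ) 1) : phiOf v = Real.log v - Real.log (1 - v) := by
  have h1 : 0 < 1 - v := by linarith [hv.2]
  unfold phiOf
  rw [Real.log_div hv.1.ne' h1.ne']

lemma sigmoid_phiOf {v : ℝ} (hv : v ∈ Ioo (0:ℝ) 1) : sigmoid (phiOf v) = v := by
  have h := log_sigmoid (phiOf v)
  rw [LL_phiOf hv] at h
  have h2 := phiOf_eq hv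
  exact Real.log_injOn_pos (mem_Ioi.2 (sigmoid_pos _)) (mem_Ioi.2 hv.1) (by linarith)

lemma S_eq_phiOf {v : ℝ} (hv : v ∈ Ioo (0:ℝ) 1) : S v = v * phiOf v - LL (phiOf v) := by
  rw [LL_phiOf hv, phiOf_eq hv]; unfold S; ring

lemma phiOf_mono {v w : ℝ} (hv : 0 < v) (hvw : v ≤ w) (hw : w < 1) : phiOf v ≤ phiOf w := by
  rw [phiOf_eq ⟨hv, by linarith⟩, phiOf_eq ⟨by linarith, hw⟩]
  have h1 := Real.log_le_log hv hvw
  have h2 := Real.log_le_log (x := 1 - w) (y := 1 - v) (by linarith) (by linarith)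
  linarith

lemma phiOf_lt {v w : ℝ} (hv : 0 < v) (hvw : v < w) (hw : w < 1) : phiOf v < phiOf w := by
  rw [phiOf_eq ⟨hv, by linarith⟩, phiOf_eq ⟨by linarith, hw⟩]
  have h1 := Real.log_lt_log hv hvw
  have h2 := Real.log_lt_log (x := 1 - w) (y := 1 - v) (by linarith) (by linarith)
  linarith

lemma S_eq_binEntropy (p : ℝ) : S p = - Real.binEntropy p := by
  unfold S Real.binEntropy; simp only [Real.log_inv]; ring

lemma S_continuous : Continuous S := by
  have : S = fun p => - Real.binEntropy p := funext S_eq_binEntropy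
  rw [this]; fun_prop

lemma S_zero : S 0 = 0 := by simp [S]

lemma S_nonpos {p : ℝ} (hp : p ∈ Icc (0:ℝ) 1) : S p ≤ 0 := by
  rw [S_eq_binEntropy]; linarith [Real.binEntropy_nonneg hp.1 hp.2]

lemma S_ge_neg (p : ℝ) : - Real.log 2 ≤ S p := by
  rw [S_eq_binEntropy]; linarith [Real.binEntropy_le_log_two (p := p)]

lemma S_abs {p : ℝ} (hp : p ∈ Icc (0:ℝ) 1) : |S p| ≤ 1 := by
  rw [abs_le]; constructor
  · have := S_ge_neg p; have := Real.log_two_lt_d9; linarith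
  · linarith [S_nonpos hp]

lemma LL_continuous : Continuous LL := by
  unfold LL
  exact Continuous.log (by fun_prop) (fun t => (LL_arg_pos t).ne')

lemma LL_mono {x y : ℝ} (h : x ≤ y) : LL x ≤ LL y := by
  unfold LL
  exact Real.log_le_log (LL_arg_pos x) (by gcongr)

lemma LL_sub_le {x y : ℝ} (h : x ≤ y) : LL y - LL x ≤ y - x := by
  have h1 := log_sigmoid x
  have h2 := log_sigmoid y
  have := Real.log_le_log (sigmoid_pos x) (sigmoid_le h)
  linarith

lemma LL_abs_sub_le (x y : ℝ) : |LL x - LL y| ≤ |x - y| := by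
  rcases le_total x y with h | h
  · rw [abs_of_nonpos (by linarith [LL_mono h]), abs_of_nonpos (by linarith)]
    linarith [LL_sub_le h]
  · rw [abs_of_nonneg (by linarith [LL_mono h]), abs_of_nonneg (by linarith)]
    linarith [LL_sub_le h]

lemma LL_le_exp (t : ℝ) : LL t ≤ Real.exp t := by
  unfold LL
  have := Real.log_le_sub_one_of_pos (LL_arg_pos t)
  linarith

lemma sigmoid_sub_le {x y : ℝ} (h : x ≤ y) : sigmoid y - sigmoid x ≤ y - x := by
  have hd : ∀ z, deriv sigmoid z ≤ 1 := fun z => by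
    rw [deriv_sigmoid]
    have := sigmoid_pos z; have := sigmoid_lt_one z
    dsimp only; nlinarith
  have := image_sub_le_mul_sub_of_deriv_le (fun z => (hasDerivAt_sigmoid z).differentiableAt) hd h
  linarith

/-- Relative entropy of the Bernoulli law of parameter `u` with respect to the one of
parameter `sigmoid φ`, written in dual form. -/
def ent (u φ : ℝ) : ℝ := S u - u * φ + LL φ

lemma ent_nonneg {u : ℝ} (hu : u ∈ Icc (0:ℝ) 1) (φ : ℝ) : 0 ≤ ent u φ := by
  have := S_ge hu φ; unfold ent; linarith

/-- A quadratic lower bound for the relative entropy: test the Fenchel-Young inequality with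
`t = φ + (u - sigmoid φ)`. -/
lemma ent_ge {u : ℝ} (hu : u ∈ Icc (0:ℝ) 1) (φ : ℝ) :
    (1 - sigmoid φ) * (u - sigmoid φ) ^ 2 ≤ ent u φ := by
  set v := sigmoid φ with hv
  have hv0 : 0 < v := sigmoid_pos φ
  have hv1 : v < 1 := sigmoid_lt_one φ
  set y := u - v with hy
  have h := S_ge hu (φ + y)
  have hy1 : |y| ≤ 1 := by rw [abs_le]; constructor <;> linarith [hu.1, hu.2]
  have he := (abs_le.1 (Real.abs_exp_sub_one_sub_id_le hy1)).2
  have key : LL (φ + y) - LL φ ≤ v * (y + y ^ 2) := by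
    have hx : 1 + Real.exp (φ + y) = (1 + Real.exp φ) * (1 + v * (Real.exp y - 1)) := by
      have : v * (1 + Real.exp φ) = Real.exp φ := by
        rw [hv, sigmoid_def, Real.exp_neg]; field_simp; ring
      rw [Real.exp_add]; linear_combination (1 - Real.exp y) * this
    have hp : 0 < 1 + v * (Real.exp y - 1) := by
      have := Real.exp_pos y; nlinarith
    have h3 : LL (φ + y) = LL φ + Real.log (1 + v * (Real.exp y - 1)) := by
      unfold LL; rw [hx, Real.log_mul (LL_arg_pos φ).ne' hp.ne']
    have h4 := Real.log_le_sub_one_of_pos hp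
    have h5 : v * (Real.exp y - 1) ≤ v * (y + y ^ 2) :=
      mul_le_mul_of_nonneg_left (by linarith) hv0.le
    linarith
  have hu' : u = v + y := by rw [hy]; ring
  unfold ent
  have : u * (φ + y) - v * (y + y ^ 2) - u * φ = (1 - v) * y ^ 2 := by rw [hu']; ring
  linarith

/-- The chi-square upper bound for the relative entropy. -/
lemma ent_phiOf_le {u v : ℝ} (hu : u ∈ Icc (0:ℝ) 1) (hv : v ∈ Ioo (0:ℝ) 1) :
    ent u (phiOf v) ≤ (u - v) ^ 2 / (v * (1 - v)) := by
  have h1v : 0 < 1 - v := by linarith [hv.2]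
  have hv0 := hv.1
  have key : ∀ q w : ℝ, 0 ≤ q → 0 < w → q * Real.log q - q * Real.log w ≤ q * (q / w - 1) := by
    intro q w hq hw
    rcases hq.eq_or_lt with rfl | hq
    · simp
    · have h := Real.log_le_sub_one_of_pos (div_pos hq hw)
      rw [Real.log_div hq.ne' hw.ne'] at h
      have := mul_le_mul_of_nonneg_left h hq.le
      linarith
  have a := key u v hu.1 hv.1
  have b := key (1 - u) (1 - v) (by linarith [hu.2]) h1v
  have e : u * (u / v - 1) + (1 - u) * ((1 - u) / (1 - v) - 1) = (u - v) ^ 2 / (v * (1 - v)) := by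
    field_simp; ring
  rw [← e]
  unfold ent
  rw [LL_phiOf hv, phiOf_eq hv]; unfold S; linarith

/-- Approximate Legendre duality with bounded slopes: affine minorants of `S` of uniformly bounded
slope recover `S` up to any `δ > 0`. -/
lemma exists_slope {δ : ℝ} (hδ : 0 < δ) : ∃ τ : ℝ → ℝ, Measurable τ ∧
    (∃ M, ∀ q, |τ q| ≤ M) ∧ ∀ q ∈ Icc (0:ℝ) 1, S q - δ ≤ q * τ q - LL (τ q) := by
  set a := Real.exp (-δ) with ha
  have ha0 : 0 < a := Real.exp_pos _
  have ha1 : a < 1 := by rw [ha, Real.exp_lt_one_iff]; linarith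
  set w : ℝ → ℝ := fun q => a * (max 0 (min q 1)) + (1 - a) / 2 with hw
  have hc : ∀ q : ℝ, 0 ≤ max 0 (min q 1) ∧ max 0 (min q 1) ≤ 1 := fun q =>
    ⟨le_max_left _ _, max_le zero_le_one (min_le_right _ _)⟩
  have hwl : ∀ q, (1 - a) / 2 ≤ w q := fun q => by
    have := mul_nonneg ha0.le (hc q).1
    simp only [hw]; linarith
  have hwu : ∀ q, w q ≤ 1 - (1 - a) / 2 := fun q => by
    have := mul_le_mul_of_nonneg_left (hc q).2 ha0.le
    simp only [hw]; linarith
  have hwm : ∀ q, w q ∈ Ioo (0:ℝ) 1 := fun q =>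
    ⟨by linarith [hwl q], by linarith [hwu q]⟩
  refine ⟨fun q => phiOf (w q), ?_, ⟨phiOf (1 - (1 - a) / 2), fun q => ?_⟩, ?_⟩
  · have : Measurable w := by fun_prop
    unfold phiOf; fun_prop
  · rw [abs_le]; constructor
    · have := phiOf_mono (by linarith) (hwl q) (hwm q).2
      refine le_trans (le_of_eq ?_) this
      rw [phiOf_eq ⟨by linarith, by linarith⟩, phiOf_eq ⟨by linarith, by linarith⟩]
      ring_nf
    · exact phiOf_mono (hwm q).1 (hwu q) (by linarith)
  · intro q hq
    have hwq : w q = a * q + (1 - a) / 2 := by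
      simp only [hw]; rw [min_eq_left hq.2, max_eq_right hq.1]
    have key : ∀ p z : ℝ, 0 ≤ p → a * p ≤ z → p * Real.log p - δ * p ≤ p * Real.log z := by
      intro p z hp hz
      rcases hp.eq_or_lt with rfl | hp
      · simp
      · have h := Real.log_le_log (mul_pos ha0 hp) hz
        rw [Real.log_mul ha0.ne' hp.ne', ha, Real.log_exp] at h
        have := mul_le_mul_of_nonneg_left h hp.le
        linarith
    have k1 := key q (w q) hq.1 (by rw [hwq]; linarith)
    have k2 := key (1 - q) (1 - w q) (by linarith [hq.2]) (by rw [hwq]; linarith)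
    dsimp only
    rw [LL_phiOf (hwm q), phiOf_eq (hwm q)]
    unfold S; linarith

/-- The potential `φ - 2 L(φ) = log (v (1 - v))`, where `v = sigmoid φ`. -/
def HH (φ : ℝ) : ℝ := φ - 2 * LL φ

lemma HH_phiOf {v : ℝ} (hv : v ∈ Ioo (0:ℝ) 1) : HH (phiOf v) = Real.log (v * (1 - v)) := by
  rw [HH, LL_phiOf hv, phiOf_eq hv, Real.log_mul hv.1.ne' (by linarith [hv.2])]; ring

lemma gg_sub {up : ℝ} (hp : up ∈ Ioo (0:ℝ) 1) (u φ p : ℝ) :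
    gg u φ p - gg up (phiOf up) 0 = ent u φ + S p + (HH φ - HH (phiOf up)) := by
  have := S_eq_phiOf hp
  simp only [gg, ent, HH, S_zero]
  change S u + S p + (1 - u) * φ - LL φ - (S up + 0 + (1 - up) * phiOf up - LL (phiOf up)) = _
  rw [this]; ring

lemma HH_abs_sub_le (x y : ℝ) : |HH x - HH y| ≤ |x - y| := by
  unfold HH
  rcases le_total x y with h | h
  · have h1 := LL_mono h
    have h2 := LL_sub_le h
    rw [abs_of_nonpos (a := x - y) (by linarith), abs_le]; constructor <;> linarith
  · have h1 := LL_mono h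
    have h2 := LL_sub_le h
    rw [abs_of_nonneg (a := x - y) (by linarith), abs_le]; constructor <;> linarith

/-- By concavity of `HH` and `HH φ₋ > HH φ₊` (which is where `u₋ + u₊ > 1` enters), the potential
well at `φ₊` has a linear lower bound on `[φ₋, φ₊]`. -/
lemma HH_lower {um up : ℝ} (h0 : 0 < um) (h1 : um < up) (h2 : up < 1) (hsum : 1 < um + up) :
    ∃ c > 0, ∀ φ ∈ Icc (phiOf um) (phiOf up), c * (phiOf up - φ) ≤ HH φ - HH (phiOf up) := by
  have hm : um ∈ Ioo (0:ℝ) 1 := ⟨h0, by linarith⟩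
  have hp : up ∈ Ioo (0:ℝ) 1 := ⟨by linarith, h2⟩
  have hlt := phiOf_lt h0 h1 h2
  have hH : HH (phiOf up) < HH (phiOf um) := by
    rw [HH_phiOf hm, HH_phiOf hp]
    apply Real.log_lt_log (mul_pos hp.1 (by linarith))
    nlinarith
  set a := phiOf um
  set b := phiOf up
  have hab : 0 < b - a := by linarith
  refine ⟨(HH a - HH b) / (b - a), div_pos (by linarith) hab, fun φ hφ => ?_⟩
  -- supporting line of the convex function `LL` at `φ`
  set q := sigmoid φ with hq
  have hsq : S q = q * φ - LL φ := by
    have h3 := log_sigmoid φ; have h4 := log_one_sub_sigmoid φ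
    unfold S; rw [hq, h3, h4]; ring
  have hqm : q ∈ Icc (0:ℝ) 1 := ⟨sigmoid_nonneg _, sigmoid_le_one _⟩
  have ea := S_ge hqm a
  have eb := S_ge hqm b
  rw [div_mul_eq_mul_div, div_le_iff₀ hab]
  unfold HH
  have w1 := mul_le_mul_of_nonneg_right ea (show 0 ≤ b - φ by linarith [hφ.2])
  have w2 := mul_le_mul_of_nonneg_right eb (show 0 ≤ φ - a by linarith [hφ.1])
  rw [hsq] at w1 w2
  nlinarith

/-! ### Monotone 1-Lipschitz profiles and weak* convergence of densities -/

/-- Nondecreasing and 1-Lipschitz on the half line `[0, ∞)`. -/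
def ML (f : ℝ → ℝ) : Prop :=
  ∀ x y : ℝ, 0 ≤ x → x ≤ y → f x ≤ f y ∧ f y - f x ≤ y - x

lemma ML.abs_sub_le {f : ℝ → ℝ} (hf : ML f) {x y : ℝ} (hx : 0 ≤ x) (hy : 0 ≤ y) :
    |f x - f y| ≤ |x - y| := by
  rcases le_total x y with h | h
  · have := hf x y hx h
    rw [abs_of_nonpos (by linarith), abs_of_nonpos (by linarith)]; linarith
  · have := hf y x hy h
    rw [abs_of_nonneg (by linarith), abs_of_nonneg (by linarith)]; linarith

lemma ML.lipschitzOn {f : ℝ → ℝ} (hf : ML f) : LipschitzOnWith 1 f (Ici 0) := by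
  refine LipschitzOnWith.of_dist_le_mul fun x hx y hy => ?_
  simpa [Real.dist_eq] using hf.abs_sub_le hx hy

lemma ML.continuousOn {f : ℝ → ℝ} (hf : ML f) : ContinuousOn f (Ici 0) :=
  hf.lipschitzOn.continuousOn

lemma ML.deriv_mem {f : ℝ → ℝ} (hf : ML f) {x : ℝ} (hx : 0 < x) : deriv f x ∈ Icc (0:ℝ) 1 := by
  have hg : f =ᶠ[𝓝 x] fun y => f (max y 0) := by
    filter_upwards [Ioi_mem_nhds hx] with y hy
    rw [max_eq_left (le_of_lt hy)]
  rw [hg.deriv_eq]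
  constructor
  · apply Monotone.deriv_nonneg
    intro y z hyz
    exact (hf _ _ (le_max_right _ _) (max_le_max_right 0 hyz)).1
  · have hl : LipschitzWith 1 (fun y => f (max y 0)) := by
      refine LipschitzWith.of_dist_le_mul fun y z => ?_
      simp only [Real.dist_eq, NNReal.coe_one, one_mul]
      refine (hf.abs_sub_le (le_max_right _ _) (le_max_right _ _)).trans ?_
      exact abs_max_sub_max_le_abs _ _ _
    have := norm_deriv_le_of_lipschitz (x₀ := x) hl
    rw [Real.norm_eq_abs] at this
    simpa using (le_abs_self _).trans this

lemma ML.integral_deriv {f : ℝ → ℝ} (hf : ML f) {a b : ℝ} (ha : 0 ≤ a) (hb : 0 ≤ b) :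
    ∫ x in a..b, deriv f x = f b - f a := by
  have : LipschitzOnWith 1 f (uIcc a b) :=
    hf.lipschitzOn.mono fun x hx => by
      rcases le_total a b with h | h
      · rw [uIcc_of_le h] at hx; exact ha.trans hx.1
      · rw [uIcc_of_ge h] at hx; exact hb.trans hx.1
  exact this.absolutelyContinuousOnInterval.integral_deriv_eq_sub

/-- A bounded measurable function on a bounded interval of the half line is integrable. -/
lemma intInt_of_bdd {f : ℝ → ℝ} {a b M : ℝ} (ha : 0 ≤ a) (hab : a ≤ b)
    (hm : AEStronglyMeasurable f (volume.restrict (Ioi 0))) (hM : ∀ x, 0 < x → |f x| ≤ M) :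
    IntervalIntegrable f volume a b := by
  rw [intervalIntegrable_iff_integrableOn_Ioc_of_le hab]
  have hsub : Ioc a b ⊆ Ioi 0 := fun x hx => lt_of_le_of_lt ha hx.1
  refine IntegrableOn.of_bound measure_Ioc_lt_top (hm.mono_set hsub) M ?_
  filter_upwards [ae_restrict_mem measurableSet_Ioc] with x hx
  exact hM x (hsub hx)

/-- Densities with values in `[0,1]` on the half line. -/
def Dens (p : ℝ → ℝ) : Prop := Measurable p ∧ ∀ x, 0 < x → p x ∈ Icc (0:ℝ) 1

lemma Dens.abs_le {p : ℝ → ℝ} (hp : Dens p) {x : ℝ} (hx : 0 < x) : |p x| ≤ 1 := by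
  have := hp.2 x hx
  rw [abs_of_nonneg this.1]; exact this.2

lemma ML.dens {f : ℝ → ℝ} (hf : ML f) : Dens (deriv f) :=
  ⟨measurable_deriv f, fun _ hx => hf.deriv_mem hx⟩

lemma Dens.intInt {p : ℝ → ℝ} (hp : Dens p) {a b : ℝ} (ha : 0 ≤ a) (hab : a ≤ b) :
    IntervalIntegrable p volume a b :=
  intInt_of_bdd ha hab hp.1.aestronglyMeasurable fun _ hx => hp.abs_le hx

lemma Dens.integrable_mul {p f : ℝ → ℝ} (hp : Dens p) (hf : IntegrableOn f (Ioi 0) volume) :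
    IntegrableOn (fun x => p x * f x) (Ioi 0) volume := by
  refine Integrable.bdd_mul (c := 1) hf hp.1.aestronglyMeasurable ?_
  filter_upwards [ae_restrict_mem measurableSet_Ioi] with x hx
  exact hp.abs_le hx

lemma Dens.abs_integral_sub_le {p f g : ℝ → ℝ} (hp : Dens p)
    (hf : IntegrableOn f (Ioi 0) volume) (hg : IntegrableOn g (Ioi 0) volume) :
    |(∫ x in Ioi (0:ℝ), p x * f x) - ∫ x in Ioi (0:ℝ), p x * g x| ≤
      ∫ x in Ioi (0:ℝ), |f x - g x| := by
  rw [← integral_sub (hp.integrable_mul hf) (hp.integrable_mul hg)]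
  refine (abs_integral_le_integral_abs).trans ?_
  refine integral_mono_ae ((hp.integrable_mul hf).sub (hp.integrable_mul hg)).abs
    (hf.sub hg).abs ?_
  filter_upwards [ae_restrict_mem measurableSet_Ioi] with x hx
  simp only [← mul_sub, abs_mul]
  exact mul_le_of_le_one_left (abs_nonneg _) (hp.abs_le hx)

/-- Weak convergence passes to `L¹`-limits of test functions, the densities being bounded by `1`. -/
lemma tendsto_of_L1_approx {ι : Type*} {F : Filter ι} {p : ι → ℝ → ℝ} {q f : ℝ → ℝ}
    (hp : ∀ i, Dens (p i)) (hq : Dens q) (hf : IntegrableOn f (Ioi 0) volume)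
    (H : ∀ ε > 0, ∃ g : ℝ → ℝ, IntegrableOn g (Ioi 0) volume ∧
      (∫ x in Ioi (0:ℝ), |f x - g x|) ≤ ε ∧
      Tendsto (fun i => ∫ x in Ioi (0:ℝ), p i x * g x) F (𝓝 (∫ x in Ioi (0:ℝ), q x * g x))) :
    Tendsto (fun i => ∫ x in Ioi (0:ℝ), p i x * f x) F (𝓝 (∫ x in Ioi (0:ℝ), q x * f x)) := by
  rw [Metric.tendsto_nhds]
  intro ε hε
  obtain ⟨g, hg, hfg, ht⟩ := H (ε / 4) (by linarith)
  rw [Metric.tendsto_nhds] at ht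
  filter_upwards [ht (ε / 4) (by linarith)] with i hi
  rw [Real.dist_eq] at hi ⊢
  have h1 := ((hp i).abs_integral_sub_le hf hg).trans hfg
  have h2 := (hq.abs_integral_sub_le hf hg).trans hfg
  rw [abs_lt] at hi ⊢
  rw [abs_le] at h1 h2
  constructor <;> linarith [hi.1, hi.2, h1.1, h1.2, h2.1, h2.2]

/-- Convergence of the primitives gives convergence of the integrals over bounded Borel sets
(Dynkin's π-λ argument, starting from half lines). -/
lemma tendsto_set_of_primitive {ι : Type*} {F : Filter ι} {p : ι → ℝ → ℝ} {q : ℝ → ℝ}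
    (hp : ∀ i, Dens (p i)) (hq : Dens q)
    (H : ∀ x, 0 ≤ x → Tendsto (fun i => ∫ t in (0:ℝ)..x, p i t) F (𝓝 (∫ t in (0:ℝ)..x, q t)))
    (N : ℝ) (hN : 0 ≤ N) (s : Set ℝ) (hs : MeasurableSet s) :
    Tendsto (fun i => ∫ t in s ∩ Ioc 0 N, p i t) F (𝓝 (∫ t in s ∩ Ioc 0 N, q t)) := by
  have hint : ∀ {r : ℝ → ℝ}, Dens r → IntegrableOn r (Ioc 0 N) volume := fun hr =>
    (intervalIntegrable_iff_integrableOn_Ioc_of_le hN).1 (hr.intInt le_rfl hN)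
  induction s, hs using MeasurableSpace.induction_on_inter
    (BorelSpace.measurable_eq.trans (borel_eq_generateFrom_Iic ℝ)) isPiSystem_Iic with
  | empty => simpa using tendsto_const_nhds
  | basic t ht =>
    obtain ⟨a, rfl⟩ := ht
    rcases le_total a 0 with ha | ha
    · have : Iic a ∩ Ioc 0 N = ∅ := by
        ext x; simp only [mem_inter_iff, mem_Iic, mem_Ioc, mem_empty_iff_false, iff_false]
        rintro ⟨h1, h2, -⟩; linarith
      simpa [this] using tendsto_const_nhds
    · have : Iic a ∩ Ioc 0 N = Ioc 0 (min a N) := by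
        ext x; simp only [mem_inter_iff, mem_Iic, mem_Ioc, le_min_iff]; tauto
      rw [this]
      have h := H (min a N) (le_min ha hN)
      simpa only [intervalIntegral.integral_of_le (le_min ha hN)] using h
  | compl t ht ih =>
    have e : ∀ {r : ℝ → ℝ}, Dens r → ∫ x in tᶜ ∩ Ioc 0 N, r x =
        (∫ x in (0:ℝ)..N, r x) - ∫ x in t ∩ Ioc 0 N, r x := by
      intro r hr
      have h := integral_add_compl₀ (μ := volume.restrict (Ioc 0 N)) ht.nullMeasurableSet
        (hint hr)
      rw [Measure.restrict_restrict ht, Measure.restrict_restrict ht.compl] at h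
      rw [intervalIntegral.integral_of_le hN]; linarith
    simp only [e (hp _), e hq]
    exact (H N hN).sub ih
  | iUnion f hd hm ih =>
    have e : ∀ {r : ℝ → ℝ}, Dens r → ∫ x in (⋃ k, f k) ∩ Ioc 0 N, r x =
        ∑' k, ∫ x in f k ∩ Ioc 0 N, r x := by
      intro r hr
      rw [iUnion_inter]
      refine integral_iUnion (fun k => (hm k).inter measurableSet_Ioc) ?_ ?_
      · exact fun i j hij => (hd hij).mono inter_subset_left inter_subset_left
      · exact (hint hr).mono_set (iUnion_subset fun k => inter_subset_right)
    simp only [e (hp _), e hq]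
    have hfin : ∀ k, volume (f k ∩ Ioc 0 N) ≠ ⊤ := fun k =>
      (lt_of_le_of_lt (measure_mono inter_subset_right) measure_Ioc_lt_top).ne
    refine tendsto_tsum_of_dominated_convergence
      (bound := fun k => volume.real (f k ∩ Ioc 0 N)) ?_ ih ?_
    · refine ENNReal.summable_toReal ?_
      rw [← measure_iUnion (fun i j hij => (hd hij).mono inter_subset_left inter_subset_left)
        (fun k => (hm k).inter measurableSet_Ioc), ← iUnion_inter]
      exact (lt_of_le_of_lt (measure_mono inter_subset_right) measure_Ioc_lt_top).ne
    · refine Eventually.of_forall fun i k => ?_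
      have := norm_setIntegral_le_of_norm_le_const (μ := volume) (f := p i) (C := 1)
        (s := f k ∩ Ioc 0 N) (hfin k).lt_top (fun x hx => (hp i).abs_le hx.2.1)
      simpa using this

/-- Densities with values in `[0,1]` whose primitives converge pointwise converge weak-*. -/
lemma weak_of_primitive {ι : Type*} {F : Filter ι} {p : ι → ℝ → ℝ} {q : ℝ → ℝ}
    (hp : ∀ i, Dens (p i)) (hq : Dens q)
    (H : ∀ x, 0 ≤ x → Tendsto (fun i => ∫ t in (0:ℝ)..x, p i t) F (𝓝 (∫ t in (0:ℝ)..x, q t)))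
    {f : ℝ → ℝ} (hf : IntegrableOn f (Ioi 0) volume) :
    Tendsto (fun i => ∫ x in Ioi (0:ℝ), p i x * f x) F (𝓝 (∫ x in Ioi (0:ℝ), q x * f x)) := by
  -- test functions supported in a bounded interval
  have step : ∀ N : ℝ, 0 ≤ N → ∀ g : ℝ → ℝ, Integrable g (volume.restrict (Ioc 0 N)) →
      Tendsto (fun i => ∫ x in Ioi (0:ℝ), p i x * (Ioc 0 N).indicator g x) F
        (𝓝 (∫ x in Ioi (0:ℝ), q x * (Ioc 0 N).indicator g x)) := by
    intro N hN g hg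
    have hres : (volume.restrict (Ioi (0:ℝ))).restrict (Ioc 0 N) = volume.restrict (Ioc 0 N) := by
      rw [Measure.restrict_restrict measurableSet_Ioc]
      congr 1; exact inter_eq_left.2 fun x hx => hx.1
    have hindI : ∀ {g : ℝ → ℝ}, Integrable g (volume.restrict (Ioc 0 N)) →
        IntegrableOn ((Ioc 0 N).indicator g) (Ioi 0) volume := by
      intro g hg
      rw [IntegrableOn, integrable_indicator_iff measurableSet_Ioc, IntegrableOn, hres]
      exact hg
    refine Integrable.induction (μ := volume.restrict (Ioc 0 N)) (fun g =>
      Tendsto (fun i => ∫ x in Ioi (0:ℝ), p i x * (Ioc 0 N).indicator g x) F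
        (𝓝 (∫ x in Ioi (0:ℝ), q x * (Ioc 0 N).indicator g x))) ?_ ?_ ?_ ?_ hg
    · intro c s hs _
      have e : ∀ r : ℝ → ℝ, ∫ x in Ioi (0:ℝ), r x * (Ioc 0 N).indicator
          (s.indicator fun _ => c) x = (∫ x in s ∩ Ioc 0 N, r x) * c := by
        intro r
        have : ∀ x, r x * (Ioc 0 N).indicator (s.indicator fun _ => c) x =
            (s ∩ Ioc 0 N).indicator (fun x => r x * c) x := by
          intro x
          rw [indicator_indicator, inter_comm]
          by_cases hx : x ∈ s ∩ Ioc 0 N <;> simp [hx, indicator]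
        simp only [this]
        rw [integral_indicator (hs.inter measurableSet_Ioc),
          Measure.restrict_restrict (hs.inter measurableSet_Ioc),
          inter_eq_left.2 (fun x hx => hx.2.1), integral_mul_const]
      simp only [e]
      exact (tendsto_set_of_primitive hp hq H N hN s hs).mul_const c
    · intro g₁ g₂ _ hg₁ hg₂ h₁ h₂
      have e : ∀ {r : ℝ → ℝ}, Dens r → ∫ x in Ioi (0:ℝ), r x * (Ioc 0 N).indicator (g₁ + g₂) x =
          (∫ x in Ioi (0:ℝ), r x * (Ioc 0 N).indicator g₁ x) +
          ∫ x in Ioi (0:ℝ), r x * (Ioc 0 N).indicator g₂ x := by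
        intro r hr
        rw [← integral_add (hr.integrable_mul (hindI hg₁)) (hr.integrable_mul (hindI hg₂))]
        congr 1; ext x; rw [indicator_add', Pi.add_apply]; ring
      simp only [e (hp _), e hq]
      exact h₁.add h₂
    · refine isClosed_of_closure_subset fun g hg => ?_
      refine tendsto_of_L1_approx hp hq (hindI (L1.integrable_coeFn g)) fun ε hε => ?_
      obtain ⟨h, hh, hd⟩ := Metric.mem_closure_iff.1 hg ε hε
      refine ⟨_, hindI (L1.integrable_coeFn h), ?_, hh⟩
      rw [L1.dist_eq_integral_dist] at hd
      refine le_trans (le_of_eq ?_) hd.le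
      have : ∀ x, |(Ioc 0 N).indicator (g : ℝ → ℝ) x - (Ioc 0 N).indicator (h : ℝ → ℝ) x| =
          (Ioc 0 N).indicator (fun x => dist (g x) (h x)) x := by
        intro x
        by_cases hx : x ∈ Ioc 0 N <;> simp [hx, Real.dist_eq]
      simp only [this]
      rw [integral_indicator measurableSet_Ioc, hres]
    · intro g₁ g₂ hg₁₂ _ h₁
      have e : ∀ r : ℝ → ℝ, ∫ x in Ioi (0:ℝ), r x * (Ioc 0 N).indicator g₂ x =
          ∫ x in Ioi (0:ℝ), r x * (Ioc 0 N).indicator g₁ x := by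
        intro r
        refine integral_congr_ae (ae_restrict_of_ae ?_)
        filter_upwards [(ae_restrict_iff' measurableSet_Ioc).1 hg₁₂] with x hx
        by_cases hx' : x ∈ Ioc 0 N
        · simp [hx', hx hx']
        · simp [hx']
      simpa only [e] using h₁
  refine tendsto_of_L1_approx hp hq hf fun ε hε => ?_
  -- truncation in space
  have htail : Tendsto (fun n : ℕ => ∫ x in Ioi (0:ℝ), |f x - (Ioc 0 (n:ℝ)).indicator f x|)
      atTop (𝓝 (∫ x in Ioi (0:ℝ), (0:ℝ))) := by
    refine tendsto_integral_of_dominated_convergence (fun x => |f x|) ?_ hf.abs ?_ ?_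
    · intro n
      exact (hf.1.sub (hf.1.indicator measurableSet_Ioc)).norm
    · intro n
      refine Eventually.of_forall fun x => ?_
      by_cases hx : x ∈ Ioc 0 (n:ℝ) <;> simp [hx]
    · filter_upwards [ae_restrict_mem measurableSet_Ioi] with x hx
      refine tendsto_const_nhds.congr' ?_
      obtain ⟨n₀, hn₀⟩ := exists_nat_ge x
      filter_upwards [eventually_ge_atTop n₀] with n hn
      have : x ∈ Ioc 0 (n:ℝ) := ⟨hx, hn₀.trans (by exact_mod_cast hn)⟩
      simp [this]
  rw [integral_zero] at htail
  obtain ⟨n, hn⟩ := (htail.eventually (gt_mem_nhds hε)).exists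
  have hI : Integrable f (volume.restrict (Ioc 0 (n:ℝ))) := hf.mono_set fun x hx => hx.1
  refine ⟨_, ?_, hn.le, step n (Nat.cast_nonneg n) f hI⟩
  exact hf.indicator measurableSet_Ioc

/-- A diagonal Arzelà-Ascoli argument on the nonnegative rationals. -/
lemma ML_compact (f : ℕ → ℝ → ℝ) (hf : ∀ n, ML (f n)) (a : ℝ) (h0 : ∀ n, f n 0 = a) :
    ∃ σ : ℕ → ℕ, StrictMono σ ∧ ∃ g : ℝ → ℝ,
      ∀ x, 0 ≤ x → Tendsto (fun n => f (σ n) x) atTop (𝓝 (g x)) := by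
  have hK : IsCompact (Set.pi univ fun q : ℚ≥0 => Icc a (a + (q:ℝ))) :=
    isCompact_univ_pi fun _ => isCompact_Icc
  obtain ⟨g, -, σ, hσ, hg⟩ := hK.isSeqCompact (x := fun n q => f n (q:ℝ)) (fun n q _ => by
    have := hf n 0 q le_rfl (by positivity)
    rw [h0] at this
    exact ⟨this.1, by linarith [this.2]⟩)
  rw [tendsto_pi_nhds] at hg
  have hc : ∀ x, 0 ≤ x → ∃ y, Tendsto (fun n => f (σ n) x) atTop (𝓝 y) := by
    intro x hx
    refine cauchySeq_tendsto_of_complete ?_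
    rw [Metric.cauchySeq_iff']
    intro ε hε
    obtain ⟨q, hq1, hq2⟩ := exists_rat_btwn (show x < x + ε / 4 by linarith)
    have hq0 : 0 ≤ q := by exact_mod_cast hx.trans hq1.le
    lift q to ℚ≥0 using hq0
    obtain ⟨N, hN⟩ := Metric.cauchySeq_iff'.1 (hg q).cauchySeq (ε / 4) (by linarith)
    refine ⟨N, fun n hn => ?_⟩
    have h1 := hN n hn
    have hq1' : x < ((q : ℚ≥0) : ℝ) := by exact_mod_cast hq1
    have hq2' : ((q : ℚ≥0) : ℝ) < x + ε / 4 := by exact_mod_cast hq2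
    have h2 := hf (σ n) x q hx hq1'.le
    have h3 := hf (σ N) x q hx hq1'.le
    simp only [Function.comp, Real.dist_eq] at h1 ⊢
    rw [abs_lt] at h1 ⊢
    constructor <;> linarith [h1.1, h1.2, h2.1, h2.2, h3.1, h3.2]
  choose! G hG using hc
  exact ⟨σ, hσ, G, hG⟩

lemma ML_of_tendsto {ι : Type*} {F : Filter ι} [F.NeBot] {f : ι → ℝ → ℝ} (hf : ∀ n, ML (f n))
    {g : ℝ → ℝ} (hg : ∀ x, 0 ≤ x → Tendsto (fun n => f n x) F (𝓝 (g x))) : ML g := by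
  intro x y hx hxy
  have hy := hx.trans hxy
  exact ⟨le_of_tendsto_of_tendsto' (hg x hx) (hg y hy) fun n => (hf n x y hx hxy).1,
    le_of_tendsto ((hg y hy).sub (hg x hx)) (Eventually.of_forall fun n => (hf n x y hx hxy).2)⟩

/-- Pointwise convergence of nondecreasing 1-Lipschitz functions with uniformly small tails is
uniform. -/
lemma ML_uniform {ι : Type*} {F : Filter ι} {f : ι → ℝ → ℝ} (hf : ∀ n, ML (f n))
    {g : ℝ → ℝ} (hML : ML g) (hg : ∀ x, 0 ≤ x → Tendsto (fun n => f n x) F (𝓝 (g x)))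
    (htail : ∀ ε > 0, ∃ R, ∀ᶠ n in F, ∀ x, R ≤ x → |f n x - g x| ≤ ε) :
    TendstoUniformlyOn f g F (Ici 0) := by
  rw [Metric.tendstoUniformlyOn_iff]
  intro ε hε
  obtain ⟨R, hR⟩ := htail (ε / 2) (by linarith)
  set δ := ε / 4 with hδ
  have hδ0 : 0 < δ := by linarith
  obtain ⟨N, hN⟩ := exists_nat_ge (R / δ)
  have hgrid : ∀ᶠ n in F, ∀ k ∈ Finset.range (N + 1), |f n (k * δ) - g (k * δ)| < δ := by
    rw [Filter.eventually_all_finset]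
    intro k _
    have := Metric.tendsto_nhds.1 (hg (k * δ) (by positivity)) δ hδ0
    simpa only [Real.dist_eq] using this
  filter_upwards [hR, hgrid] with n h1 h2 x hx
  rw [dist_comm, Real.dist_eq]
  rcases le_total R x with h | h
  · linarith [h1 x h]
  · have hx0 : 0 ≤ x := hx
    set k := ⌊x / δ⌋₊ with hk
    have hk1 : (k:ℝ) * δ ≤ x := by
      rw [← le_div_iff₀ hδ0]; exact Nat.floor_le (by positivity)
    have hk2 : x < (k + 1) * δ := by
      rw [← div_lt_iff₀ hδ0]; exact Nat.lt_floor_add_one _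
    have hkN : k ∈ Finset.range (N + 1) := by
      rw [Finset.mem_range]
      refine Nat.lt_succ_of_le (Nat.floor_le_of_le (le_trans ?_ hN))
      gcongr
    have h3 := h2 k hkN
    have h4 := hf n (k * δ) x (by positivity) hk1
    have h5 := hML (k * δ) x (by positivity) hk1
    rw [abs_lt] at h3 ⊢
    constructor <;> linarith [h3.1, h3.2, h4.1, h4.2, h5.1, h5.2]

/-! ### The calibration inequality -/

/-- The calibration primitive, as a function of the distance `y = φ₊ - φ` to the well:
`F(y) = y - y log (c y / 2)`. -/
def FF (c y : ℝ) : ℝ := y - y * Real.log (c * y / 2)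

lemma FF_zero (c : ℝ) : FF c 0 = 0 := by simp [FF]

lemma FF_continuous {c : ℝ} (hc : 0 < c) : Continuous (FF c) := by
  have : FF c = fun y => y - (2 / c) * ((c * y / 2) * Real.log (c * y / 2)) := by
    ext y; unfold FF; field_simp
  rw [this]
  have h := Real.continuous_mul_log
  exact continuous_id.sub (continuous_const.mul
    (h.comp ((continuous_const.mul continuous_id).div_const 2)))

lemma FF_hasDerivAt {c y : ℝ} (hc : 0 < c) (hy : 0 < y) :
    HasDerivAt (FF c) (- Real.log (c * y / 2)) y := by
  have h1 : HasDerivAt (fun y : ℝ => c * y / 2) (c * 1 / 2) y :=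
    ((hasDerivAt_id y).const_mul c).div_const 2
  have h2 : HasDerivAt (FF c)
      (1 - (1 * Real.log (c * y / 2) + y * ((c * 1 / 2) / (c * y / 2)))) y :=
    (hasDerivAt_id' y).fun_sub ((hasDerivAt_id' y).fun_mul (h1.log (by positivity)))
  have e : 1 - (1 * Real.log (c * y / 2) + y * ((c * 1 / 2) / (c * y / 2)))
      = - Real.log (c * y / 2) := by
    field_simp
    ring
  rwa [e] at h2

lemma MemCplus.ml {pm pp : ℝ} {φ : ℝ → ℝ} (h : MemCplus pm pp φ) : ML φ := h.1

lemma MemCplus.mem {pm pp : ℝ} {φ : ℝ → ℝ} (h : MemCplus pm pp φ) {x : ℝ} (hx : 0 ≤ x) :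
    φ x ∈ Icc pm pp := by
  refine ⟨h.2.1 ▸ (h.1 0 x le_rfl hx).1, ?_⟩
  refine ge_of_tendsto h.2.2 ?_
  filter_upwards [eventually_ge_atTop x] with y hy
  exact (h.1 x y hx hy).1

lemma MemUplus.dens {u : ℝ → ℝ} (h : MemUplus u) : Dens u := ⟨h.1, fun x hx => h.2 x hx.le⟩

lemma MemCplus.aesm {pm pp : ℝ} {φ : ℝ → ℝ} (h : MemCplus pm pp φ) :
    AEStronglyMeasurable φ (volume.restrict (Ioi 0)) :=
  (h.ml.continuousOn.mono Ioi_subset_Ici_self).aestronglyMeasurable measurableSet_Ioi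

lemma MemCplus.abs_le {pm pp : ℝ} {φ : ℝ → ℝ} (h : MemCplus pm pp φ) {x : ℝ} (hx : 0 ≤ x) :
    |φ x| ≤ |pm| + |pp| := by
  have := h.mem hx
  rw [_root_.abs_le]
  constructor
  · linarith [neg_abs_le pm, abs_nonneg pp, this.1]
  · linarith [le_abs_self pp, abs_nonneg pm, this.2]

lemma LL_abs_le (t : ℝ) : |LL t| ≤ 1 + |t| := by
  have h1 := LL_abs_sub_le t 0
  have h2 : LL 0 = Real.log 2 := by unfold LL; norm_num
  have h3 := Real.log_two_lt_d9
  have h4 : 0 ≤ Real.log 2 := Real.log_nonneg (by norm_num)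
  rw [h2, sub_zero] at h1
  rw [abs_le] at h1 ⊢
  constructor <;> linarith [h1.1, h1.2]

section
variable {um up : ℝ} {u φ : ℝ → ℝ} {a b : ℝ}

lemma aesm_ent (hX : MemXplus um up u φ) :
    AEStronglyMeasurable (fun x => ent (u x) (φ x)) (volume.restrict (Ioi 0)) := by
  unfold ent
  have hu := hX.1.1.aestronglyMeasurable (μ := volume.restrict (Ioi (0:ℝ)))
  exact ((S_continuous.comp_aestronglyMeasurable hu).sub (hu.mul hX.2.aesm)).add
    (LL_continuous.comp_aestronglyMeasurable hX.2.aesm)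

lemma intInt_ent (hX : MemXplus um up u φ) (ha : 0 ≤ a) (hab : a ≤ b) :
    IntervalIntegrable (fun x => ent (u x) (φ x)) volume a b := by
  refine intInt_of_bdd (M := 2 + 2 * (|phiOf um| + |phiOf up|)) ha hab (aesm_ent hX) ?_
  intro x hx
  have h1 := S_abs (hX.1.2 x hx.le)
  have h2 := hX.2.abs_le hx.le
  have h3 := LL_abs_le (φ x)
  have h4 : |u x * φ x| ≤ |φ x| := by
    rw [abs_mul]; exact mul_le_of_le_one_left (abs_nonneg _) (hX.1.dens.abs_le hx)
  unfold ent
  have := abs_add_le (S (u x) - u x * φ x) (LL (φ x))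
  have := abs_sub (S (u x)) (u x * φ x)
  linarith

lemma intInt_S {p : ℝ → ℝ} (hp : Dens p) (ha : 0 ≤ a) (hab : a ≤ b) :
    IntervalIntegrable (fun x => S (p x)) volume a b :=
  intInt_of_bdd (M := 1) ha hab (S_continuous.measurable.comp hp.1).aestronglyMeasurable
    fun x hx => S_abs (hp.2 x hx)

lemma intInt_comp (hφ : MemCplus (phiOf um) (phiOf up) φ) {f : ℝ → ℝ} (hf : Continuous f)
    (ha : 0 ≤ a) (hab : a ≤ b) : IntervalIntegrable (fun x => f (φ x)) volume a b := by
  refine ContinuousOn.intervalIntegrable ?_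
  refine hf.comp_continuousOn (hφ.ml.continuousOn.mono ?_)
  rw [uIcc_of_le hab]; exact fun x hx => ha.trans hx.1

lemma HH_continuous : Continuous HH := by
  unfold HH; exact continuous_id.sub (continuous_const.mul LL_continuous)

lemma intInt_gg (hp : up ∈ Ioo (0:ℝ) 1) (hX : MemXplus um up u φ) (ha : 0 ≤ a) (hab : a ≤ b) :
    IntervalIntegrable (fun x => gg (u x) (φ x) (deriv φ x) - gg up (phiOf up) 0) volume a b := by
  simp only [gg_sub hp]
  exact ((intInt_ent hX ha hab).add (intInt_S hX.2.ml.dens ha hab)).add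
    (intInt_comp hX.2 (HH_continuous.sub continuous_const) ha hab)

/-- Regularised calibration: the chain rule and the fundamental theorem of calculus for the
Lipschitz function `x ↦ F(ε + φ₊ - φ(x))`. -/
lemma integral_deriv_mul_log {c ε : ℝ} (hc : 0 < c) (hε : 0 < ε)
    (hφ : MemCplus (phiOf um) (phiOf up) φ) (ha : 0 ≤ a) (hab : a ≤ b) :
    IntervalIntegrable (fun x => deriv φ x * Real.log (c * (phiOf up - φ x + ε) / 2)) volume a b ∧
    ∫ x in a..b, deriv φ x * Real.log (c * (phiOf up - φ x + ε) / 2) =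
      FF c (phiOf up - φ b + ε) - FF c (phiOf up - φ a + ε) := by
  set P := phiOf up
  have hd : ∀ x, 0 ≤ x → P - φ x + ε ∈ Icc ε (P - phiOf um + ε) := fun x hx =>
    ⟨by linarith [(hφ.mem hx).2], by linarith [(hφ.mem hx).1]⟩
  have hsub : uIcc a b ⊆ Ici 0 := by
    rw [uIcc_of_le hab]; exact fun x hx => ha.trans hx.1
  constructor
  · refine (hφ.ml.dens.intInt ha hab).mul_continuousOn ?_
    refine ContinuousOn.log ?_ ?_
    · have := hφ.ml.continuousOn.mono hsub
      exact ((continuousOn_const.mul ((continuousOn_const.sub this).add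
        continuousOn_const)).div_const 2)
    · intro x hx
      have := (hd x (hsub hx)).1
      have : 0 < P - φ x + ε := by linarith
      positivity
  · -- the composition is Lipschitz since `F` is `C¹` away from zero
    have hL : ∃ K, LipschitzOnWith K (FF c) (Icc ε (P - phiOf um + ε)) := by
      have hcd : ContDiffOn ℝ 1 (FF c) (Icc ε (P - phiOf um + ε)) := by
        unfold FF
        refine contDiffOn_id.sub (contDiffOn_id.mul (ContDiffOn.log ?_ ?_))
        · exact (contDiffOn_const.mul contDiffOn_id).div_const 2
        · intro y hy
          have : 0 < y := lt_of_lt_of_le hε hy.1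
          positivity
      exact hcd.exists_lipschitzOnWith one_ne_zero (convex_Icc _ _) isCompact_Icc
    obtain ⟨K, hK⟩ := hL
    have hlip : LipschitzOnWith (K * 1) (fun x => FF c (P - φ x + ε)) (uIcc a b) := by
      refine hK.comp (g := FF c) (f := fun x => P - φ x + ε) ?_ fun x hx => hd x (hsub hx)
      refine LipschitzOnWith.of_dist_le_mul fun x hx y hy => ?_
      have := hφ.ml.abs_sub_le (hsub hy) (hsub hx)
      simp only [Real.dist_eq, NNReal.coe_one, one_mul]
      rw [abs_sub_comm x y]
      convert this using 2; ring
    have hac := hlip.absolutelyContinuousOnInterval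
    rw [← hac.integral_deriv_eq_sub]
    have hφac : AbsolutelyContinuousOnInterval φ a b :=
      (hφ.ml.lipschitzOn.mono hsub).absolutelyContinuousOnInterval
    refine intervalIntegral.integral_congr_ae ?_
    filter_upwards [hφac.ae_differentiableAt] with x hx hxm
    have hxm' : x ∈ uIcc a b := uIoc_subset_uIcc hxm
    have hdx := (hx hxm').hasDerivAt
    have hpos : 0 < P - φ x + ε := lt_of_lt_of_le hε (hd x (hsub hxm')).1
    have h1 : HasDerivAt (fun x => P - φ x + ε) (- deriv φ x) x :=
      (hdx.const_sub P).add_const ε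
    have h2 := (FF_hasDerivAt hc hpos).comp x h1
    have h3 : deriv (fun x => FF c (P - φ x + ε)) x =
      -Real.log (c * (P - φ x + ε) / 2) * - deriv φ x := h2.deriv
    rw [h3]; ring

/-- The calibration inequality. Since `S(p) ≥ p t - e^t` for every `t`, the choice
`t = log (c (φ₊ - φ) / 2)` bounds the energy below by an exact derivative plus half of the
potential well. -/
lemma cal_phi {c : ℝ} (hc : 0 < c)
    (hwell : ∀ y ∈ Icc (phiOf um) (phiOf up), c * (phiOf up - y) ≤ HH y - HH (phiOf up))
    (hφ : MemCplus (phiOf um) (phiOf up) φ) (ha : 0 ≤ a) (hab : a ≤ b) :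
    c / 2 * (∫ x in a..b, (phiOf up - φ x)) + FF c (phiOf up - φ b) - FF c (phiOf up - φ a) ≤
      ∫ x in a..b, (S (deriv φ x) + (HH (φ x) - HH (phiOf up))) := by
  have hint : IntervalIntegrable (fun x => phiOf up - φ x) volume a b :=
    intInt_comp hφ (f := fun y => phiOf up - y) (by fun_prop) ha hab
  have key : ∀ ε > 0, c / 2 * (∫ x in a..b, (phiOf up - φ x)) - c * ε / 2 * (b - a) +
      FF c (phiOf up - φ b + ε) - FF c (phiOf up - φ a + ε) ≤
      ∫ x in a..b, (S (deriv φ x) + (HH (φ x) - HH (phiOf up))) := by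
    intro ε hε
    obtain ⟨hi, he⟩ := integral_deriv_mul_log (um := um) (up := up) hc hε hφ ha hab
    have : c / 2 * (∫ x in a..b, (phiOf up - φ x)) - c * ε / 2 * (b - a) +
        FF c (phiOf up - φ b + ε) - FF c (phiOf up - φ a + ε) =
        ∫ x in a..b, (c / 2 * (phiOf up - φ x) - c * ε / 2 +
          deriv φ x * Real.log (c * (phiOf up - φ x + ε) / 2)) := by
      rw [intervalIntegral.integral_add ((hint.const_mul _).sub
        intervalIntegrable_const) hi, he, intervalIntegral.integral_sub (hint.const_mul _)
        intervalIntegrable_const,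
        intervalIntegral.integral_const_mul, intervalIntegral.integral_const, smul_eq_mul]
      ring
    rw [this]
    refine intervalIntegral.integral_mono_on_of_le_Ioo hab
      (((hint.const_mul _).sub intervalIntegrable_const).add hi)
      ((intInt_S hφ.ml.dens ha hab).add
        (intInt_comp hφ (HH_continuous.sub continuous_const) ha hab)) ?_
    intro x hx
    have hx0 : 0 < x := lt_of_le_of_lt ha hx.1
    have hm := hφ.mem hx0.le
    have h1 := hwell _ hm
    have hpos : 0 < c * (phiOf up - φ x + ε) / 2 := by
      have : 0 < phiOf up - φ x + ε := by linarith [hm.2]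
      positivity
    have h2 := S_ge (hφ.ml.deriv_mem hx0) (Real.log (c * (phiOf up - φ x + ε) / 2))
    have h3 := LL_le_exp (Real.log (c * (phiOf up - φ x + ε) / 2))
    rw [Real.exp_log hpos] at h3
    linarith
  have hF := FF_continuous hc
  have hlim : Tendsto (fun ε : ℝ => c / 2 * (∫ x in a..b, (phiOf up - φ x)) -
      c * ε / 2 * (b - a) + FF c (phiOf up - φ b + ε) - FF c (phiOf up - φ a + ε)) (𝓝[>] 0)
      (𝓝 (c / 2 * (∫ x in a..b, (phiOf up - φ x)) - c * 0 / 2 * (b - a) +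
        FF c (phiOf up - φ b + 0) - FF c (phiOf up - φ a + 0))) := by
    refine tendsto_nhdsWithin_of_tendsto_nhds (Continuous.tendsto ?_ 0)
    fun_prop
  have := le_of_tendsto hlim (eventually_mem_nhdsWithin.mono key)
  simpa using this

lemma cal {c : ℝ} (hc : 0 < c) (hp : up ∈ Ioo (0:ℝ) 1)
    (hwell : ∀ y ∈ Icc (phiOf um) (phiOf up), c * (phiOf up - y) ≤ HH y - HH (phiOf up))
    (hX : MemXplus um up u φ) (ha : 0 ≤ a) (hab : a ≤ b) :
    (∫ x in a..b, ent (u x) (φ x)) + c / 2 * (∫ x in a..b, (phiOf up - φ x)) +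
      FF c (phiOf up - φ b) - FF c (phiOf up - φ a) ≤
      ∫ x in a..b, (gg (u x) (φ x) (deriv φ x) - gg up (phiOf up) 0) := by
  have h := cal_phi hc hwell hX.2 ha hab
  have h2 : IntervalIntegrable (fun x => S (deriv φ x) + (HH (φ x) - HH (phiOf up))) volume a b :=
    (intInt_S hX.2.ml.dens ha hab).add
      (intInt_comp hX.2 (HH_continuous.sub continuous_const) ha hab)
  have h3 := intervalIntegral.integral_add (intInt_ent hX ha hab) h2
  simp only [← add_assoc] at h3
  simp only [gg_sub hp]
  rw [h3]
  simp only [add_assoc] at h ⊢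
  linarith

lemma integral_ent_nonneg (hX : MemXplus um up u φ) (ha : 0 ≤ a) (hab : a ≤ b) :
    0 ≤ ∫ x in a..b, ent (u x) (φ x) :=
  intervalIntegral.integral_nonneg hab fun x hx => ent_nonneg (hX.1.2 x (ha.trans hx.1)) _

lemma integral_phi_nonneg (hφ : MemCplus (phiOf um) (phiOf up) φ) (ha : 0 ≤ a) (hab : a ≤ b) :
    0 ≤ ∫ x in a..b, (phiOf up - φ x) :=
  intervalIntegral.integral_nonneg hab fun x hx => by linarith [(hφ.mem (ha.trans hx.1)).2]

end

/-! ### Integrability on the domain of the limit functional -/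

section
variable {um up : ℝ} {u φ : ℝ → ℝ} {c : ℝ}

lemma FF_bdd (hc : 0 < c) (D : ℝ) : ∃ K, ∀ y ∈ Icc 0 D, |FF c y| ≤ K := by
  obtain ⟨K, hK⟩ := isCompact_Icc.exists_bound_of_continuousOn
    (FF_continuous hc).continuousOn (s := Icc 0 D)
  exact ⟨K, hK⟩

lemma dist_mem (hφ : MemCplus (phiOf um) (phiOf up) φ) {x : ℝ} (hx : 0 ≤ x) :
    phiOf up - φ x ∈ Icc 0 (phiOf up - phiOf um) :=
  ⟨by linarith [(hφ.mem hx).2], by linarith [(hφ.mem hx).1]⟩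

/-- `-S(φ')` is integrable as soon as `φ - φ₊` is: its integral over `(0,L)` is controlled by the
calibration inequality, uniformly in `L`. -/
lemma integrable_S (hc : 0 < c)
    (hwell : ∀ y ∈ Icc (phiOf um) (phiOf up), c * (phiOf up - y) ≤ HH y - HH (phiOf up))
    (hφ : MemCplus (phiOf um) (phiOf up) φ)
    (hd : IntegrableOn (fun x => phiOf up - φ x) (Ioi 0) volume) :
    IntegrableOn (fun x => S (deriv φ x)) (Ioi 0) volume := by
  obtain ⟨K, hK⟩ := FF_bdd hc (phiOf up - phiOf um)
  set I := ∫ x in Ioi (0:ℝ), (phiOf up - φ x)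
  refine integrableOn_Ioi_of_intervalIntegral_norm_bounded (I + 2 * K) (0:ℝ)
    (l := atTop) (b := id) (fun L => ?_) tendsto_id ?_
  · rcases le_total 0 L with hL | hL
    · exact (intervalIntegrable_iff_integrableOn_Ioc_of_le hL).1 (intInt_S hφ.ml.dens le_rfl hL)
    · simp [Ioc_eq_empty (not_lt.2 hL)]
  · filter_upwards [eventually_ge_atTop 0] with L hL
    have h1 := cal_phi hc hwell hφ le_rfl hL
    have hS := intInt_S hφ.ml.dens le_rfl hL
    have hH := intInt_comp hφ (f := fun y => HH y - HH (phiOf up))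
      (HH_continuous.sub continuous_const) le_rfl hL
    have hdi := intInt_comp hφ (f := fun y => phiOf up - y) (by fun_prop) le_rfl hL
    rw [intervalIntegral.integral_add hS hH] at h1
    have h2 : ∫ x in (0:ℝ)..L, ‖S (deriv φ x)‖ = - ∫ x in (0:ℝ)..L, S (deriv φ x) := by
      rw [← intervalIntegral.integral_neg]
      refine intervalIntegral.integral_congr_ae (ae_of_all _ fun x hx => ?_)
      rw [uIoc_of_le hL] at hx
      rw [Real.norm_eq_abs, abs_of_nonpos (S_nonpos (hφ.ml.deriv_mem hx.1))]
    have h3 : ∫ x in (0:ℝ)..L, (HH (φ x) - HH (phiOf up)) ≤ ∫ x in (0:ℝ)..L, (phiOf up - φ x) := by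
      refine intervalIntegral.integral_mono_on hL hH hdi fun x hx => ?_
      have h := HH_abs_sub_le (φ x) (phiOf up)
      rw [abs_sub_comm (φ x), abs_of_nonneg (dist_mem hφ hx.1).1] at h
      exact (le_abs_self _).trans h
    have h4 : ∫ x in (0:ℝ)..L, (phiOf up - φ x) ≤ I := by
      rw [intervalIntegral.integral_of_le hL]
      refine setIntegral_mono_set hd ?_ (Ioc_subset_Ioi_self.eventuallyLE)
      filter_upwards [ae_restrict_mem measurableSet_Ioi] with x hx
      exact (dist_mem hφ (le_of_lt hx)).1
    have h5 := integral_phi_nonneg hφ le_rfl hL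
    have h6 := hK _ (dist_mem hφ hL)
    have h7 := hK _ (dist_mem hφ le_rfl)
    rw [abs_le] at h6 h7
    simp only [id]
    rw [h2]
    have h8 : 0 ≤ c / 2 * ∫ x in (0:ℝ)..L, (phiOf up - φ x) := by positivity
    linarith

/-- On the domain of `G⁺` the integrand is genuinely integrable. -/
lemma integrable_gg (hc : 0 < c) (hp : up ∈ Ioo (0:ℝ) 1)
    (hwell : ∀ y ∈ Icc (phiOf um) (phiOf up), c * (phiOf up - y) ≤ HH y - HH (phiOf up))
    (hX : MemXplus um up u φ)
    (hu2 : IntegrableOn (fun x => (u x - up) ^ 2) (Ioi 0) volume)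
    (hd : IntegrableOn (fun x => phiOf up - φ x) (Ioi 0) volume) :
    IntegrableOn (fun x => gg (u x) (φ x) (deriv φ x) - gg up (phiOf up) 0) (Ioi 0) volume := by
  simp only [gg_sub hp]
  refine Integrable.add (Integrable.add ?_ (integrable_S hc hwell hX.2 hd)) ?_
  · refine Integrable.mono' ((hu2.div_const (up * (1 - up))).add hd) (aesm_ent hX) ?_
    filter_upwards [ae_restrict_mem measurableSet_Ioi] with x hx
    have hu := hX.1.2 x (le_of_lt hx)
    have hdx := (dist_mem hX.2 (le_of_lt hx)).1
    rw [Real.norm_eq_abs, abs_of_nonneg (ent_nonneg hu _)]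
    have h1 := ent_phiOf_le hu hp
    have h2 := LL_mono (x := φ x) (y := phiOf up) (by linarith)
    have h3 : u x * (phiOf up - φ x) ≤ phiOf up - φ x := mul_le_of_le_one_left hdx hu.2
    simp only [Pi.add_apply]
    unfold ent at h1 ⊢
    linarith
  · refine Integrable.mono' hd ?_ ?_
    · exact (HH_continuous.sub continuous_const).comp_aestronglyMeasurable hX.2.aesm
    · filter_upwards [ae_restrict_mem measurableSet_Ioi] with x hx
      have h := HH_abs_sub_le (φ x) (phiOf up)
      rw [abs_sub_comm (φ x), abs_of_nonneg (dist_mem hX.2 (le_of_lt hx)).1] at h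
      exact h

lemma Glplus_eq {l : ℝ} (hl : 0 ≤ l) (h : ∀ x, l ≤ x → u x = up ∧ φ x = phiOf up) :
    Glplus um up l u φ =
      ((∫ x in (0:ℝ)..l, (gg (u x) (φ x) (deriv φ x) - gg up (phiOf up) 0) : ℝ) : EReal) := by
  rw [Glplus, if_pos h, intervalIntegral.integral_of_le hl, integral_Ioc_eq_integral_Ioo]

lemma Glplus_lt {l C : ℝ} (hl : 0 ≤ l) (h : Glplus um up l u φ < (C : EReal)) :
    (∀ x, l ≤ x → u x = up ∧ φ x = phiOf up) ∧
      ∫ x in (0:ℝ)..l, (gg (u x) (φ x) (deriv φ x) - gg up (phiOf up) 0) < C := by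
  by_cases hb : ∀ x, l ≤ x → u x = up ∧ φ x = phiOf up
  · rw [Glplus_eq hl hb] at h
    exact ⟨hb, by exact_mod_cast h⟩
  · rw [Glplus, if_neg hb] at h
    exact absurd h (by simp)

end

/-! ### Equi-coercivity -/

section
variable {um up : ℝ} {c : ℝ}

/-- Quantitative tightness: a bound on the energy forces `φ` to approach `φ₊` at rate `1/x`. -/
lemma tail_bound {u φ : ℝ → ℝ} (hc : 0 < c) (hp : up ∈ Ioo (0:ℝ) 1)
    (hwell : ∀ y ∈ Icc (phiOf um) (phiOf up), c * (phiOf up - y) ≤ HH y - HH (phiOf up))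
    (hX : MemXplus um up u φ) {l C : ℝ} (hl : 0 ≤ l) (hG : Glplus um up l u φ < (C : EReal))
    {x : ℝ} (hx : 0 ≤ x) :
    c / 2 * (x * (phiOf up - φ x)) ≤ C + FF c (phiOf up - phiOf um) := by
  obtain ⟨hb, hC⟩ := Glplus_lt hl hG
  have h1 := cal hc hp hwell hX le_rfl hl
  have h2 := integral_ent_nonneg hX le_rfl hl
  rw [(hb l le_rfl).2, hX.2.2.1, sub_self, FF_zero] at h1
  have h3 : x * (phiOf up - φ x) ≤ ∫ t in (0:ℝ)..l, (phiOf up - φ t) := by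
    rcases le_total l x with h | h
    · rw [(hb x h).2, sub_self, mul_zero]
      exact integral_phi_nonneg hX.2 le_rfl hl
    · have hi := fun {a b : ℝ} (ha : 0 ≤ a) (hab : a ≤ b) =>
        intInt_comp hX.2 (f := fun y => phiOf up - y) (by fun_prop) ha hab
      rw [← intervalIntegral.integral_add_adjacent_intervals (hi le_rfl hx) (hi hx h)]
      have h4 := integral_phi_nonneg hX.2 hx h
      have h5 : ∫ t in (0:ℝ)..x, (phiOf up - φ x) ≤ ∫ t in (0:ℝ)..x, (phiOf up - φ t) :=
        intervalIntegral.integral_mono_on hx intervalIntegrable_const (hi le_rfl hx)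
          fun t ht => by linarith [(hX.2.1 t x ht.1 ht.2).1]
      rw [intervalIntegral.integral_const, smul_eq_mul, sub_zero] at h5
      linarith
  have h6 : c / 2 * (x * (phiOf up - φ x)) ≤ c / 2 * ∫ t in (0:ℝ)..l, (phiOf up - φ t) :=
    mul_le_mul_of_nonneg_left h3 (by positivity)
  linarith

/-- The primitive of a density on the half line, as a monotone `1`-Lipschitz function. -/
lemma ml_primitive {p : ℝ → ℝ} (hp : Dens p) : ML (fun x => ∫ t in (0:ℝ)..x, p t) := by
  intro x y hx hxy
  have h := intervalIntegral.integral_add_adjacent_intervals (hp.intInt le_rfl hx)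
    (hp.intInt hx hxy)
  have h1 : 0 ≤ ∫ t in x..y, p t := by
    rw [intervalIntegral.integral_of_le hxy]
    exact setIntegral_nonneg measurableSet_Ioc fun t ht => (hp.2 t (lt_of_le_of_lt hx ht.1)).1
  have h2 : ∫ t in x..y, p t ≤ ∫ t in x..y, (1:ℝ) :=
    intervalIntegral.integral_mono_on_of_le_Ioo hxy (hp.intInt hx hxy) intervalIntegrable_const
      fun t ht => (hp.2 t (lt_of_le_of_lt hx ht.1)).2
  simp only [intervalIntegral.integral_const, smul_eq_mul, mul_one] at h2
  constructor <;> dsimp only <;> linarith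

/-- Weak* sequential compactness of `L^∞(ℝ₊;[0,1])`. -/
lemma Dens_compact (p : ℕ → ℝ → ℝ) (hp : ∀ n, Dens (p n)) :
    ∃ σ : ℕ → ℕ, StrictMono σ ∧ ∃ u : ℝ → ℝ, MemUplus u ∧
      ∀ f : ℝ → ℝ, IntegrableOn f (Ioi 0) volume →
        Tendsto (fun n => ∫ x in Ioi (0:ℝ), p (σ n) x * f x) atTop
          (𝓝 (∫ x in Ioi (0:ℝ), u x * f x)) := by
  obtain ⟨σ, hσ, V, hV⟩ := ML_compact (fun n x => ∫ t in (0:ℝ)..x, p n t)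
    (fun n => ml_primitive (hp n)) 0 (fun n => by simp)
  have hVm : ML V := ML_of_tendsto (fun n => ml_primitive (hp (σ n))) hV
  have hV0 : V 0 = 0 := tendsto_nhds_unique (hV 0 le_rfl) (by simp)
  -- truncation makes the density lie in `[0,1]` at the endpoint as well
  let u : ℝ → ℝ := fun x => max 0 (min 1 (deriv V x))
  have hu : ∀ x, u x ∈ Icc (0:ℝ) 1 := fun x =>
    ⟨le_max_left _ _, max_le zero_le_one (min_le_left _ _)⟩
  have hum : Measurable u :=
    measurable_const.max (measurable_const.min (measurable_deriv V))
  refine ⟨σ, hσ, u, ⟨hum, fun x _ => hu x⟩, fun f hf => ?_⟩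
  refine weak_of_primitive (fun n => hp (σ n)) ⟨hum, fun x _ => hu x⟩ (fun x hx => ?_) hf
  have : ∫ t in (0:ℝ)..x, u t = V x := by
    have h1 : ∫ t in (0:ℝ)..x, u t = ∫ t in (0:ℝ)..x, deriv V t := by
      refine intervalIntegral.integral_congr_ae (ae_of_all _ fun t ht => ?_)
      rw [uIoc_of_le hx] at ht
      have := hVm.deriv_mem ht.1
      simp only [u]
      rw [min_eq_right this.2, max_eq_right this.1]
    rw [h1, hVm.integral_deriv le_rfl hx, hV0, sub_zero]
  rw [this]; exact hV x hx

theorem equicoercive (h0 : 0 < um) (h1 : um < up) (h2 : up < 1) (hsum : 1 < um + up)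
    (U Φ : ℝ → ℝ → ℝ) (hX : ∀ l, MemXplus um up (U l) (Φ l))
    (hlim : Filter.limsup (fun l => Glplus um up l (U l) (Φ l)) atTop < (⊤ : EReal))
    (ln : ℕ → ℝ) (hln : Tendsto ln atTop atTop) :
    ∃ σ : ℕ → ℕ, StrictMono σ ∧ ∃ u φ : ℝ → ℝ, MemXplus um up u φ ∧
      ConvXplus (fun n => U (ln (σ n))) (fun n => Φ (ln (σ n))) u φ := by
  obtain ⟨c, hc, hwell⟩ := HH_lower h0 h1 h2 hsum
  have hp : up ∈ Ioo (0:ℝ) 1 := ⟨h0.trans h1, h2⟩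
  obtain ⟨C, hC1, -⟩ := EReal.lt_iff_exists_real_btwn.1 hlim
  have hC := Filter.eventually_lt_of_limsup_lt hC1
  obtain ⟨σ₁, hσ₁, φ, hφ⟩ := ML_compact (fun n => Φ (ln n)) (fun n => (hX _).2.ml) (phiOf um)
    (fun n => (hX _).2.2.1)
  obtain ⟨σ₂, hσ₂, u, hu, hconv⟩ := Dens_compact (fun n => U (ln (σ₁ n)))
    (fun n => (hX _).1.dens)
  have hφm : ML φ := ML_of_tendsto (fun n => (hX (ln (σ₁ n))).2.ml) hφ
  have hφ2 : ∀ x, 0 ≤ x → Tendsto (fun n => Φ (ln (σ₁ (σ₂ n))) x) atTop (𝓝 (φ x)) :=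
    fun x hx => (hφ x hx).comp hσ₂.tendsto_atTop
  have hb : ∀ᶠ n in atTop, ∀ x, 0 ≤ x →
      c / 2 * (x * (phiOf up - Φ (ln (σ₁ (σ₂ n))) x)) ≤ C + FF c (phiOf up - phiOf um) := by
    have ht : Tendsto (fun n => ln (σ₁ (σ₂ n))) atTop atTop :=
      hln.comp ((hσ₁.comp hσ₂).tendsto_atTop)
    filter_upwards [ht.eventually hC, ht.eventually (eventually_ge_atTop 0)] with n hn hn0 x hx
    exact tail_bound hc hp hwell (hX _) hn0 hn hx
  have hφb : ∀ x, 0 ≤ x →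
      c / 2 * (x * (phiOf up - φ x)) ≤ C + FF c (phiOf up - phiOf um) := fun x hx =>
    le_of_tendsto (((tendsto_const_nhds.sub (hφ2 x hx)).const_mul x).const_mul (c / 2))
      (hb.mono fun n hn => hn x hx)
  have hφle : ∀ x, 0 ≤ x → φ x ≤ phiOf up := fun x hx =>
    le_of_tendsto (hφ2 x hx) (Eventually.of_forall fun n => ((hX _).2.mem hx).2)
  set M := C + FF c (phiOf up - phiOf um)
  have hlow : ∀ ψ : ℝ, ∀ x, 0 < x → c / 2 * (x * (phiOf up - ψ)) ≤ M →
      phiOf up - ψ ≤ 2 * M / c / x := by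
    intro ψ x hx h
    rw [le_div_iff₀ hx, le_div_iff₀ hc]
    linarith
  have hdec : Tendsto (fun x : ℝ => 2 * M / c / x) atTop (𝓝 0) :=
    tendsto_const_nhds.div_atTop tendsto_id
  have hφlim : Tendsto φ atTop (𝓝 (phiOf up)) := by
    have : Tendsto (fun x => phiOf up - 2 * M / c / x) atTop (𝓝 (phiOf up)) := by
      simpa using tendsto_const_nhds.sub hdec
    refine tendsto_of_tendsto_of_tendsto_of_le_of_le' this tendsto_const_nhds ?_ ?_
    · filter_upwards [eventually_gt_atTop 0] with x hx
      linarith [hlow _ x hx (hφb x hx.le)]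
    · filter_upwards [eventually_ge_atTop 0] with x hx using hφle x hx
  refine ⟨σ₁ ∘ σ₂, hσ₁.comp hσ₂, u, φ, ⟨hu, hφm, ?_, hφlim⟩, hconv, ?_⟩
  · exact tendsto_nhds_unique (hφ2 0 le_rfl) (by
      simp only [fun l => (hX l).2.2.1]; exact tendsto_const_nhds)
  · refine ML_uniform (fun n => (hX _).2.ml) hφm hφ2 fun ε hε => ?_
    obtain ⟨R, hR0, hR⟩ := ((eventually_gt_atTop 0).and
      (hdec.eventually (gt_mem_nhds hε))).exists
    refine ⟨R, hb.mono fun n hn x hx => ?_⟩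
    have hx0 : 0 ≤ x := hR0.le.trans hx
    have e1 := hlow _ R hR0 (hn R hR0.le)
    have e2 := hlow _ R hR0 (hφb R hR0.le)
    have e3 := (hφm R x hR0.le hx).1
    have e4 := ((hX (ln (σ₁ (σ₂ n)))).2.1 R x hR0.le hx).1
    have e5 := hφle x hx0
    have e6 := ((hX (ln (σ₁ (σ₂ n)))).2.mem hx0).2
    simp only [Function.comp_apply]
    rw [abs_le]; constructor <;> linarith

end

/-! ### The lower bound -/

section
variable {um up : ℝ} {c : ℝ}

/-- Weak convergence tested against a bounded function on a bounded interval. -/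
lemma tendsto_interval {ι : Type*} {F : Filter ι} {p : ι → ℝ → ℝ} {q f : ℝ → ℝ} {L : ℝ}
    (hL : 0 ≤ L) (hf : IntervalIntegrable f volume 0 L)
    (H : ∀ f : ℝ → ℝ, IntegrableOn f (Ioi 0) volume →
      Tendsto (fun n => ∫ x in Ioi (0:ℝ), p n x * f x) F (𝓝 (∫ x in Ioi (0:ℝ), q x * f x))) :
    Tendsto (fun n => ∫ x in (0:ℝ)..L, p n x * f x) F (𝓝 (∫ x in (0:ℝ)..L, q x * f x)) := by
  have h1 := H ((Ioc 0 L).indicator f)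
    ((integrable_indicator_iff measurableSet_Ioc).2
      ((intervalIntegrable_iff_integrableOn_Ioc_of_le hL).1 hf)).integrableOn
  have h2 : ∀ g : ℝ → ℝ, ∫ x in Ioi (0:ℝ), g x * (Ioc 0 L).indicator f x =
      ∫ x in (0:ℝ)..L, g x * f x := by
    intro g
    have : (fun x => g x * (Ioc 0 L).indicator f x) = (Ioc 0 L).indicator fun x => g x * f x := by
      ext x
      by_cases hx : x ∈ Ioc 0 L <;> simp [hx]
    rw [this, setIntegral_indicator measurableSet_Ioc, intervalIntegral.integral_of_le hL,
      inter_eq_right.2 Ioc_subset_Ioi_self]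
  simpa only [h2] using h1

/-- Convergence of the derivatives of uniformly converging profiles. -/
lemma weak_deriv {ι : Type*} {F : Filter ι} {Φ : ι → ℝ → ℝ} {φ : ℝ → ℝ}
    (hΦ : ∀ l, ML (Φ l)) (hφ : ML φ)
    (h : ∀ x, 0 ≤ x → Tendsto (fun l => Φ l x) F (𝓝 (φ x)))
    {f : ℝ → ℝ} (hf : IntegrableOn f (Ioi 0) volume) :
    Tendsto (fun l => ∫ x in Ioi (0:ℝ), deriv (Φ l) x * f x) F
      (𝓝 (∫ x in Ioi (0:ℝ), deriv φ x * f x)) := by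
  refine weak_of_primitive (fun l => (hΦ l).dens) hφ.dens (fun x hx => ?_) hf
  simp only [fun l => (hΦ l).integral_deriv le_rfl hx, hφ.integral_deriv le_rfl hx]
  exact (h x hx).sub (h 0 le_rfl)

/-- Lower semicontinuity on a bounded interval, together with the calibration estimate for the
remaining part of the energy. The entropies are linearised at the limit, with an error `δ` which
takes care of the singular slopes at `0` and `1`. -/
lemma liminf_local (hc : 0 < c) (hp : up ∈ Ioo (0:ℝ) 1)
    (hwell : ∀ y ∈ Icc (phiOf um) (phiOf up), c * (phiOf up - y) ≤ HH y - HH (phiOf up))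
    {u φ : ℝ → ℝ} (hX : MemXplus um up u φ)
    {U Φ : ℝ → ℝ → ℝ} (hXl : ∀ l, MemXplus um up (U l) (Φ l))
    (hconv : ConvXplusFam U Φ u φ) {C : ℝ}
    (hC : ∃ᶠ l in atTop, Glplus um up l (U l) (Φ l) < (C : EReal)) {L : ℝ} (hL : 0 ≤ L) :
    (∫ x in (0:ℝ)..L, (gg (u x) (φ x) (deriv φ x) - gg up (phiOf up) 0)) -
      FF c (phiOf up - φ L) ≤ C := by
  have hpt : ∀ x, 0 ≤ x → Tendsto (fun l => Φ l x) atTop (𝓝 (φ x)) :=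
    fun x hx => hconv.2.tendsto_at hx
  suffices H : ∀ δ > 0, (∫ x in (0:ℝ)..L, (gg (u x) (φ x) (deriv φ x) - gg up (phiOf up) 0)) -
      FF c (phiOf up - φ L) - 4 * δ * L ≤ C by
    have hlim : Tendsto (fun δ : ℝ => (∫ x in (0:ℝ)..L,
        (gg (u x) (φ x) (deriv φ x) - gg up (phiOf up) 0)) - FF c (phiOf up - φ L) - 4 * δ * L)
        (𝓝[>] 0) (𝓝 ((∫ x in (0:ℝ)..L,
        (gg (u x) (φ x) (deriv φ x) - gg up (phiOf up) 0)) - FF c (phiOf up - φ L)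
          - 4 * 0 * L)) :=
      tendsto_nhdsWithin_of_tendsto_nhds (Continuous.tendsto (by fun_prop) 0)
    have := le_of_tendsto hlim (eventually_mem_nhdsWithin.mono H)
    simpa using this
  intro δ hδ
  obtain ⟨τ, hτm, ⟨M, hM⟩, hτ⟩ := exists_slope hδ
  set f1 : ℝ → ℝ := fun x => τ (u x) - φ x with hf1
  set f2 : ℝ → ℝ := fun x => τ (deriv φ x) with hf2
  set r : ℝ → ℝ := fun x => - LL (τ (u x)) - LL (τ (deriv φ x)) + φ x - LL (φ x)
    - gg up (phiOf up) 0 with hr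
  have hLm : Measurable LL := LL_continuous.measurable
  have hτu : Measurable fun x => τ (u x) := hτm.comp hX.1.1
  have hτφ : Measurable fun x => τ (deriv φ x) := hτm.comp (measurable_deriv φ)
  have iφ : IntervalIntegrable φ volume 0 L := intInt_comp hX.2 continuous_id le_rfl hL
  have iL : IntervalIntegrable (fun x => LL (φ x)) volume 0 L :=
    intInt_comp hX.2 LL_continuous le_rfl hL
  have iτ1 : IntervalIntegrable (fun x => τ (u x)) volume 0 L :=
    intInt_of_bdd le_rfl hL hτu.aestronglyMeasurable fun x _ => hM _
  have iτ2 : IntervalIntegrable f2 volume 0 L :=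
    intInt_of_bdd le_rfl hL hτφ.aestronglyMeasurable fun x _ => hM _
  have iL1 : IntervalIntegrable (fun x => LL (τ (u x))) volume 0 L :=
    intInt_of_bdd (M := 1 + M) le_rfl hL (hLm.comp hτu).aestronglyMeasurable fun x _ =>
      (LL_abs_le _).trans (by linarith [hM (u x)])
  have iL2 : IntervalIntegrable (fun x => LL (τ (deriv φ x))) volume 0 L :=
    intInt_of_bdd (M := 1 + M) le_rfl hL (hLm.comp hτφ).aestronglyMeasurable fun x _ =>
      (LL_abs_le _).trans (by linarith [hM (deriv φ x)])
  have if1 : IntervalIntegrable f1 volume 0 L := iτ1.sub iφ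
  have ir : IntervalIntegrable r volume 0 L :=
    ((((iL1.neg).sub iL2).add iφ).sub iL).sub intervalIntegrable_const
  have imul : ∀ {p f : ℝ → ℝ}, Dens p → IntervalIntegrable f volume 0 L →
      IntervalIntegrable (fun x => p x * f x) volume 0 L := by
    intro p f hp hf
    rw [intervalIntegrable_iff_integrableOn_Ioc_of_le hL] at hf ⊢
    refine Integrable.bdd_mul (c := 1) hf hp.1.aestronglyMeasurable ?_
    filter_upwards [ae_restrict_mem measurableSet_Ioc] with x hx
    exact hp.abs_le hx.1
  have isum : ∀ {w ψ : ℝ → ℝ}, MemXplus um up w ψ →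
      IntervalIntegrable (fun x => w x * f1 x + deriv ψ x * f2 x + r x) volume 0 L :=
    fun h => ((imul h.1.dens if1).add (imul h.2.ml.dens iτ2)).add ir
  have hsplit : ∀ {w ψ : ℝ → ℝ}, MemXplus um up w ψ →
      ∫ x in (0:ℝ)..L, (w x * f1 x + deriv ψ x * f2 x + r x) =
        (∫ x in (0:ℝ)..L, w x * f1 x) + (∫ x in (0:ℝ)..L, deriv ψ x * f2 x)
          + ∫ x in (0:ℝ)..L, r x := fun h => by
    rw [intervalIntegral.integral_add ((imul h.1.dens if1).add (imul h.2.ml.dens iτ2)) ir,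
      intervalIntegral.integral_add (imul h.1.dens if1) (imul h.2.ml.dens iτ2)]
  -- the linearised energies converge
  have hlim : Tendsto (fun l => (∫ x in (0:ℝ)..L, (U l x * f1 x + deriv (Φ l) x * f2 x + r x))
      - 2 * δ * L - FF c (phiOf up - Φ l L)) atTop
      (𝓝 ((∫ x in (0:ℝ)..L, (u x * f1 x + deriv φ x * f2 x + r x))
      - 2 * δ * L - FF c (phiOf up - φ L))) := by
    simp only [fun l => hsplit (hXl l), hsplit hX]
    refine Tendsto.sub (Tendsto.sub (Tendsto.add (Tendsto.add ?_ ?_) tendsto_const_nhds)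
      tendsto_const_nhds) ?_
    · exact tendsto_interval hL if1 hconv.1
    · exact tendsto_interval hL iτ2 fun f hf =>
        weak_deriv (fun l => (hXl l).2.ml) hX.2.ml hpt hf
    · exact ((FF_continuous hc).tendsto _).comp (tendsto_const_nhds.sub (hpt L hL))
  have hclose : ∀ᶠ l in atTop, ∀ x, 0 ≤ x → |Φ l x - φ x| ≤ δ := by
    filter_upwards [Metric.tendstoUniformlyOn_iff.1 hconv.2 δ hδ] with l hl x hx
    have := hl x hx
    rw [dist_comm, Real.dist_eq] at this
    exact this.le
  have hfreq := (hC.and_eventually hclose).and_eventually (eventually_ge_atTop L)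
  have hle := le_of_tendsto_of_frequently (b := C) hlim (hfreq.mono ?_)
  · have hpoint : (∫ x in (0:ℝ)..L, (gg (u x) (φ x) (deriv φ x) - gg up (phiOf up) 0 - 2 * δ)) ≤
        ∫ x in (0:ℝ)..L, (u x * f1 x + deriv φ x * f2 x + r x) := by
      refine intervalIntegral.integral_mono_on_of_le_Ioo hL
        ((intInt_gg hp hX le_rfl hL).sub intervalIntegrable_const) (isum hX) fun x hx => ?_
      have e1 := hτ _ (hX.1.2 x hx.1.le)
      have e2 := hτ _ (hX.2.ml.deriv_mem hx.1)
      simp only [hf1, hf2, hr]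
      have e3 : gg (u x) (φ x) (deriv φ x) =
        S (u x) + S (deriv φ x) + (1 - u x) * φ x - LL (φ x) := rfl
      rw [e3]; linarith
    rw [intervalIntegral.integral_sub (intInt_gg hp hX le_rfl hL) intervalIntegrable_const,
      intervalIntegral.integral_const, smul_eq_mul, sub_zero] at hpoint
    linarith
  · rintro l ⟨⟨hG, hcl⟩, hl⟩
    obtain ⟨hb, hlt⟩ := Glplus_lt (hL.trans hl) hG
    have hXL := hXl l
    rw [← intervalIntegral.integral_add_adjacent_intervals (intInt_gg hp hXL le_rfl hL)
      (intInt_gg hp hXL hL hl)] at hlt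
    have h1 := cal hc hp hwell hXL hL hl
    rw [(hb l le_rfl).2, sub_self, FF_zero] at h1
    have h2 := integral_ent_nonneg hXL hL hl
    have h3 : 0 ≤ c / 2 * ∫ x in L..l, (phiOf up - Φ l x) :=
      mul_nonneg (by positivity) (integral_phi_nonneg hXL.2 hL hl)
    have hpoint : (∫ x in (0:ℝ)..L, (U l x * f1 x + deriv (Φ l) x * f2 x + r x - 2 * δ)) ≤
        ∫ x in (0:ℝ)..L, (gg (U l x) (Φ l x) (deriv (Φ l) x) - gg up (phiOf up) 0) := by
      refine intervalIntegral.integral_mono_on_of_le_Ioo hL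
        ((isum hXL).sub intervalIntegrable_const) (intInt_gg hp hXL le_rfl hL) fun x hx => ?_
      have hU := hXL.1.2 x hx.1.le
      have e1 := S_ge hU (τ (u x))
      have e2 := S_ge (hXL.2.ml.deriv_mem hx.1) (τ (deriv φ x))
      have e4 := hcl x hx.1.le
      have e5 := (LL_abs_sub_le (Φ l x) (φ x)).trans e4
      have e6 : |(1 - U l x) * (Φ l x - φ x)| ≤ δ := by
        rw [abs_mul, abs_of_nonneg (by linarith [hU.2])]
        exact (mul_le_of_le_one_left (abs_nonneg _) (by linarith [hU.1])).trans e4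
      rw [abs_le] at e5 e6
      have e3 : gg (U l x) (Φ l x) (deriv (Φ l) x) =
        S (U l x) + S (deriv (Φ l) x) + (1 - U l x) * Φ l x - LL (Φ l x) := rfl
      simp only [hf1, hf2, hr]
      rw [e3]; linarith [e5.2, e6.1]
    rw [intervalIntegral.integral_sub (isum hXL) intervalIntegrable_const,
      intervalIntegral.integral_const, smul_eq_mul, sub_zero] at hpoint
    linarith

theorem gamma_liminf (h0 : 0 < um) (h1 : um < up) (h2 : up < 1) (hsum : 1 < um + up)
    {u φ : ℝ → ℝ} (hX : MemXplus um up u φ)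
    {U Φ : ℝ → ℝ → ℝ} (hXl : ∀ l, MemXplus um up (U l) (Φ l))
    (hconv : ConvXplusFam U Φ u φ) :
    GEplus um up u φ ≤ Filter.liminf (fun l => Glplus um up l (U l) (Φ l)) atTop := by
  obtain ⟨c, hc, hwell⟩ := HH_lower h0 h1 h2 hsum
  have hp : up ∈ Ioo (0:ℝ) 1 := ⟨h0.trans h1, h2⟩
  refine EReal.le_of_forall_lt_iff_le.1 fun C hC => ?_
  have hfr := Filter.frequently_lt_of_liminf_lt (by isBoundedDefault) hC
  have hloc := fun {L : ℝ} (hL : 0 ≤ L) => liminf_local hc hp hwell hX hXl hconv hfr hL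
  -- the pair belongs to the domain of the limit functional
  have hB : ∀ L, 0 ≤ L → (∫ x in (0:ℝ)..L, ent (u x) (φ x)) +
      c / 2 * (∫ x in (0:ℝ)..L, (phiOf up - φ x)) ≤ C + FF c (phiOf up - phiOf um) := by
    intro L hL
    have e1 := hloc hL
    have e2 := cal hc hp hwell hX le_rfl hL
    rw [hX.2.2.1] at e2
    linarith
  have hd : IntegrableOn (fun x => phiOf up - φ x) (Ioi 0) volume := by
    refine integrableOn_Ioi_of_intervalIntegral_norm_bounded
      (2 / c * (C + FF c (phiOf up - phiOf um))) (0:ℝ)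
      (l := atTop) (b := id) (fun L => ?_) tendsto_id ?_
    · rcases le_total 0 L with hL | hL
      · exact (intervalIntegrable_iff_integrableOn_Ioc_of_le hL).1
          (intInt_comp hX.2 (f := fun y => phiOf up - y) (by fun_prop) le_rfl hL)
      · simp [Ioc_eq_empty (not_lt.2 hL)]
    · filter_upwards [eventually_ge_atTop 0] with L hL
      have e1 := hB L hL
      have e2 := integral_ent_nonneg hX le_rfl hL
      have e3 : ∫ x in (0:ℝ)..L, ‖phiOf up - φ x‖ = ∫ x in (0:ℝ)..L, (phiOf up - φ x) := by
        refine intervalIntegral.integral_congr fun x hx => ?_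
        rw [uIcc_of_le hL] at hx
        simp only [Real.norm_eq_abs]
        rw [abs_of_nonneg (dist_mem hX.2 hx.1).1]
      simp only [id]
      rw [e3]
      have e4 : c / 2 * (∫ x in (0:ℝ)..L, (phiOf up - φ x)) ≤ C + FF c (phiOf up - phiOf um) := by
        linarith
      calc ∫ x in (0:ℝ)..L, (phiOf up - φ x)
          = 2 / c * (c / 2 * (∫ x in (0:ℝ)..L, (phiOf up - φ x))) := by field_simp
        _ ≤ _ := by gcongr
  have he : IntegrableOn (fun x => ent (u x) (φ x)) (Ioi 0) volume := by
    refine integrableOn_Ioi_of_intervalIntegral_norm_bounded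
      (C + FF c (phiOf up - phiOf um)) (0:ℝ)
      (l := atTop) (b := id) (fun L => ?_) tendsto_id ?_
    · rcases le_total 0 L with hL | hL
      · exact (intervalIntegrable_iff_integrableOn_Ioc_of_le hL).1 (intInt_ent hX le_rfl hL)
      · simp [Ioc_eq_empty (not_lt.2 hL)]
    · filter_upwards [eventually_ge_atTop 0] with L hL
      have e1 := hB L hL
      have e2 : 0 ≤ c / 2 * ∫ x in (0:ℝ)..L, (phiOf up - φ x) :=
        mul_nonneg (by positivity) (integral_phi_nonneg hX.2 le_rfl hL)
      have e3 : ∫ x in (0:ℝ)..L, ‖ent (u x) (φ x)‖ = ∫ x in (0:ℝ)..L, ent (u x) (φ x) := by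
        refine intervalIntegral.integral_congr fun x hx => ?_
        rw [uIcc_of_le hL] at hx
        simp only [Real.norm_eq_abs]
        rw [abs_of_nonneg (ent_nonneg (hX.1.2 x hx.1) _)]
      simp only [id]
      rw [e3]; linarith
  have hu2 : IntegrableOn (fun x => (u x - up) ^ 2) (Ioi 0) volume := by
    refine Integrable.mono' ((he.const_mul (2 / (1 - up))).add (hd.const_mul 2))
      ((hX.1.1.sub_const up).pow_const 2).aestronglyMeasurable ?_
    filter_upwards [ae_restrict_mem measurableSet_Ioi] with x hx
    have hu := hX.1.2 x (le_of_lt hx)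
    have hdx := (dist_mem hX.2 (le_of_lt hx)).1
    have h1up : 0 < 1 - up := by linarith
    have e1 := ent_ge hu (φ x)
    have e2 : sigmoid (φ x) ≤ up := by
      rw [← sigmoid_phiOf hp]; exact sigmoid_le (by linarith)
    have e3 := sigmoid_sub_le (x := φ x) (y := phiOf up) (by linarith)
    rw [sigmoid_phiOf hp] at e3
    have e4 := sigmoid_pos (φ x)
    set v := sigmoid (φ x)
    have e5 : (1 - up) * (u x - v) ^ 2 ≤ ent (u x) (φ x) :=
      (mul_le_mul_of_nonneg_right (by linarith) (sq_nonneg _)).trans e1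
    have e6 : (u x - v) ^ 2 ≤ ent (u x) (φ x) / (1 - up) := by
      rw [le_div_iff₀ h1up]; linarith
    have e7 : (v - up) ^ 2 ≤ phiOf up - φ x := by nlinarith
    rw [Real.norm_eq_abs, abs_of_nonneg (sq_nonneg _)]
    simp only [Pi.add_apply]
    have e8 : 2 / (1 - up) * ent (u x) (φ x) = 2 * (ent (u x) (φ x) / (1 - up)) := by ring
    rw [e8]
    nlinarith [sq_nonneg ((u x - v) - (v - up))]
  have hd' : IntegrableOn (fun x => φ x - phiOf up) (Ioi 0) volume := by
    convert hd.neg using 1; ext x; simp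
  rw [GEplus, if_pos ⟨hu2, hd'⟩]
  have hlim := intervalIntegral_tendsto_integral_Ioi 0 (integrable_gg hc hp hwell hX hu2 hd)
    tendsto_id
  have hF : Tendsto (fun L => FF c (phiOf up - φ L)) atTop (𝓝 0) := by
    have := ((FF_continuous hc).tendsto (phiOf up - phiOf up)).comp
      (tendsto_const_nhds.sub hX.2.2.2)
    rwa [sub_self, FF_zero] at this
  have := le_of_tendsto (hlim.sub hF) ((eventually_ge_atTop 0).mono fun L hL => hloc hL)
  rw [sub_zero] at this
  exact_mod_cast this

end

/-! ### Recovery sequences -/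

section
variable {um up : ℝ} {c : ℝ}

/-- The recovery profile: `φ` is lifted to `φ₊` along a ramp of slope one ending at `l`. -/
def recΦ (P l : ℝ) (φ : ℝ → ℝ) (x : ℝ) : ℝ := max (φ x) (P - max (l - x) 0)

/-- The recovery density: `u` is replaced by `u₊` at distance less than `D` from `l`. -/
def recU (up D l : ℝ) (u : ℝ → ℝ) (x : ℝ) : ℝ := if x < l - D then u x else up

lemma recΦ_ml {P l : ℝ} {φ : ℝ → ℝ} (hφ : ML φ) : ML (recΦ P l φ) := by
  intro x y hx hxy
  obtain ⟨h1, h2⟩ := hφ x y hx hxy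
  have h3 : max (l - y) 0 ≤ max (l - x) 0 := max_le_max (by linarith) le_rfl
  have h4 : max (l - x) 0 ≤ max (l - y) 0 + (y - x) :=
    max_le (by linarith [le_max_left (l - y) 0]) (by linarith [le_max_right (l - y) 0])
  unfold recΦ
  refine ⟨max_le_max h1 (by linarith), ?_⟩
  have h5 := le_max_left (φ x) (P - max (l - x) 0)
  have h6 := le_max_right (φ x) (P - max (l - x) 0)
  have : max (φ y) (P - max (l - y) 0) ≤ max (φ x) (P - max (l - x) 0) + (y - x) :=
    max_le (by linarith) (by linarith)
  linarith

theorem gamma_limsup (h0 : 0 < um) (h1 : um < up) (h2 : up < 1) (hsum : 1 < um + up)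
    {u φ : ℝ → ℝ} (hX : MemXplus um up u φ) :
    ∃ U Φ : ℝ → ℝ → ℝ, (∀ l, MemXplus um up (U l) (Φ l)) ∧
      ConvXplusFam U Φ u φ ∧
      Filter.limsup (fun l => Glplus um up l (U l) (Φ l)) atTop ≤ GEplus um up u φ := by
  obtain ⟨c, hc, hwell⟩ := HH_lower h0 h1 h2 hsum
  have hp : up ∈ Ioo (0:ℝ) 1 := ⟨h0.trans h1, h2⟩
  by_cases hdom : IntegrableOn (fun x => (u x - up)^2) (Ioi 0) volume ∧
      IntegrableOn (fun x => φ x - phiOf up) (Ioi 0) volume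
  swap
  · refine ⟨fun _ => u, fun _ => φ, fun _ => hX, ⟨fun f _ => tendsto_const_nhds, ?_⟩, ?_⟩
    · rw [Metric.tendstoUniformlyOn_iff]
      intro ε hε
      exact Eventually.of_forall fun l x _ => by simpa using hε
    · rw [GEplus, if_neg hdom]; exact le_top
  have hd : IntegrableOn (fun x => phiOf up - φ x) (Ioi 0) volume := by
    convert hdom.2.neg using 1; ext x; simp
  set P := phiOf up with hP
  set D := P - phiOf um with hD
  have hDpos : 0 < D := by
    have := phiOf_lt h0 h1 h2
    simp only [hD, hP]; linarith
  have hle : ∀ {x}, 0 ≤ x → φ x ≤ P := fun hx => (hX.2.mem hx).2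
  have hge : ∀ {x}, 0 ≤ x → P - D ≤ φ x := fun hx => by
    have := (hX.2.mem hx).1
    simp only [hD]; linarith
  have heq : ∀ {l x}, 0 ≤ x → x ≤ l - D → recΦ P l φ x = φ x := by
    intro l x hx hxl
    refine max_eq_left ?_
    have := le_max_left (l - x) 0
    linarith [hge hx]
  have hend : ∀ {l x}, 0 ≤ x → l ≤ x → recΦ P l φ x = P := by
    intro l x hx hlx
    unfold recΦ
    rw [max_eq_right (show l - x ≤ 0 by linarith), sub_zero, max_eq_right (hle hx)]
  have hrange : ∀ {l x}, 0 ≤ x → recΦ P l φ x ≤ P := by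
    intro l x hx
    exact max_le (hle hx) (by linarith [le_max_right (l - x) 0])
  have hmem : ∀ l, D ≤ l → MemXplus um up (recU up D l u) (recΦ P l φ) := by
    intro l hl
    refine ⟨⟨Measurable.ite measurableSet_Iio hX.1.1 measurable_const, fun x hx => ?_⟩,
      recΦ_ml hX.2.ml, ?_, ?_⟩
    · unfold recU
      split_ifs
      · exact hX.1.2 x hx
      · exact ⟨hp.1.le, hp.2.le⟩
    · rw [heq le_rfl (by linarith), hX.2.2.1]
    · refine tendsto_const_nhds.congr' ?_
      filter_upwards [eventually_ge_atTop l, eventually_ge_atTop 0] with x hx hx0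
      exact (hend hx0 hx).symm
  let U : ℝ → ℝ → ℝ := fun l => if D ≤ l then recU up D l u else u
  let Φ : ℝ → ℝ → ℝ := fun l => if D ≤ l then recΦ P l φ else φ
  have hU : ∀ {l}, D ≤ l → U l = recU up D l u := fun h => if_pos h
  have hΦ : ∀ {l}, D ≤ l → Φ l = recΦ P l φ := fun h => if_pos h
  have hXl : ∀ l, MemXplus um up (U l) (Φ l) := by
    intro l
    by_cases h : D ≤ l
    · rw [hU h, hΦ h]; exact hmem l h
    · simp only [U, Φ, if_neg h]; exact hX
  have hshift : Tendsto (fun l : ℝ => l - D) atTop atTop := tendsto_atTop_add_const_right _ _ tendsto_id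
  have hgap : Tendsto (fun l => P - φ (l - D)) atTop (𝓝 0) := by
    have := (tendsto_const_nhds (x := P)).sub (hX.2.2.2.comp hshift)
    simpa [hP] using this
  refine ⟨U, Φ, hXl, ⟨fun f hf => ?_, ?_⟩, ?_⟩
  · refine tendsto_integral_filter_of_dominated_convergence (fun x => |f x|) ?_ ?_ hf.abs ?_
    · exact Eventually.of_forall fun l =>
        ((hXl l).1.dens.integrable_mul hf).aestronglyMeasurable
    · refine Eventually.of_forall fun l => ?_
      filter_upwards [ae_restrict_mem measurableSet_Ioi] with x hx
      rw [Real.norm_eq_abs, abs_mul]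
      exact mul_le_of_le_one_left (abs_nonneg _) ((hXl l).1.dens.abs_le hx)
    · filter_upwards [ae_restrict_mem measurableSet_Ioi] with x hx
      refine tendsto_const_nhds.congr' ?_
      filter_upwards [eventually_ge_atTop D, eventually_gt_atTop (x + D)] with l hl hl2
      rw [hU hl, recU, if_pos (by linarith)]
  · rw [Metric.tendstoUniformlyOn_iff]
    intro ε hε
    filter_upwards [eventually_ge_atTop D, hgap.eventually (gt_mem_nhds hε)] with l hl hg x hx
    rw [hΦ hl, dist_comm, Real.dist_eq]
    rcases le_total x (l - D) with h | h
    · rw [heq hx h, sub_self, abs_zero]; exact hε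
    · have e1 : φ x ≤ recΦ P l φ x := le_max_left _ _
      have e2 := hrange (l := l) hx
      have e3 := (hX.2.1 (l - D) x (by linarith) h).1
      rw [abs_of_nonneg (by linarith)]; linarith
  · rw [GEplus, if_pos hdom]
    have hint := integrable_gg hc hp hwell hX hdom.1 hd
    have hlim := (intervalIntegral_tendsto_integral_Ioi 0 hint hshift).add (hgap.const_mul D)
    rw [mul_zero, add_zero] at hlim
    have hlimE := (continuous_coe_real_ereal.tendsto _).comp hlim
    rw [← hlimE.limsup_eq]
    refine limsup_le_limsup ?_
    filter_upwards [eventually_ge_atTop D] with l hl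
    have hl0 : 0 ≤ l - D := by linarith
    have hXm := hmem l hl
    rw [hU hl, hΦ hl, Glplus_eq (by linarith)
      (fun x hx => ⟨by rw [recU, if_neg (by linarith)], hend (by linarith) hx⟩)]
    simp only [Function.comp_apply, EReal.coe_le_coe_iff]
    rw [← intervalIntegral.integral_add_adjacent_intervals (intInt_gg hp hXm le_rfl hl0)
      (intInt_gg hp hXm hl0 (by linarith))]
    refine add_le_add (le_of_eq ?_) ?_
    · rw [intervalIntegral.integral_of_le hl0, intervalIntegral.integral_of_le hl0,
        integral_Ioc_eq_integral_Ioo, integral_Ioc_eq_integral_Ioo]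
      refine setIntegral_congr_fun measurableSet_Ioo fun x hx => ?_
      have e1 : recΦ P l φ =ᶠ[𝓝 x] φ := by
        filter_upwards [Ioo_mem_nhds hx.1 hx.2] with y hy
        exact heq hy.1.le hy.2.le
      simp only [e1.deriv_eq, e1.eq_of_nhds, recU, if_pos hx.2]
    · have hmono : (∫ x in (l - D)..l, (gg (recU up D l u x) (recΦ P l φ x)
          (deriv (recΦ P l φ) x) - gg up (phiOf up) 0)) ≤ ∫ x in (l - D)..l, (P - φ (l - D)) := by
        refine intervalIntegral.integral_mono_on_of_le_Ioo (by linarith)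
          (intInt_gg hp hXm hl0 (by linarith)) intervalIntegrable_const fun x hx => ?_
        have hx0 : 0 < x := by linarith [hx.1]
        rw [recU, if_neg (by linarith [hx.1])]
        have e1 := S_nonpos (hXm.2.ml.deriv_mem hx0)
        have e2 := hrange (l := l) hx0.le
        have e3 := LL_sub_le e2
        have e4 : φ x ≤ recΦ P l φ x := le_max_left _ _
        have e5 := (hX.2.1 (l - D) x hl0 hx.1.le).1
        have e6 : (1 - up) * (recΦ P l φ x - P) ≤ 0 :=
          mul_nonpos_of_nonneg_of_nonpos (by linarith) (by linarith)
        have e7 : gg up (recΦ P l φ x) (deriv (recΦ P l φ) x) - gg up (phiOf up) 0 =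
            S (deriv (recΦ P l φ) x) + (1 - up) * (recΦ P l φ x - P)
              + (LL P - LL (recΦ P l φ x)) := by
          simp only [gg, S_zero, LL, hP]; ring
        rw [e7]; linarith
      rw [intervalIntegral.integral_const, smul_eq_mul] at hmono
      have : l - (l - D) = D := by ring
      rwa [this] at hmono

end

/-! ### Convergence of the stationary profiles -/

/-- Grönwall's inequality for `f' ≤ -y f`, through the integrating factor. -/
lemma gronwall_lin {f f' y : ℝ → ℝ} {l : ℝ} (hf : ContinuousOn f (Icc 0 l)) (hy : Continuous y)
    (hd : ∀ x ∈ Ioo 0 l, HasDerivAt f (f' x) x)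
    (hle : ∀ x ∈ Ioo 0 l, f' x ≤ - (y x) * f x) {x : ℝ} (hx : x ∈ Icc 0 l) :
    f x * Real.exp (∫ t in (0:ℝ)..x, y t) ≤ f 0 := by
  have hI : ∀ x, HasDerivAt (fun x => Real.exp (∫ t in (0:ℝ)..x, y t))
      (Real.exp (∫ t in (0:ℝ)..x, y t) * y x) x := fun x =>
    (hy.integral_hasStrictDerivAt 0 x).hasDerivAt.exp
  have hIc : Continuous fun x => Real.exp (∫ t in (0:ℝ)..x, y t) :=
    continuous_iff_continuousAt.2 fun x => (hI x).continuousAt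
  have hD : ∀ x ∈ Ioo 0 l, HasDerivAt (fun x => f x * Real.exp (∫ t in (0:ℝ)..x, y t))
      (f' x * Real.exp (∫ t in (0:ℝ)..x, y t) +
        f x * (Real.exp (∫ t in (0:ℝ)..x, y t) * y x)) x := fun x hx =>
    (hd x hx).mul (hI x)
  have hanti : AntitoneOn (fun x => f x * Real.exp (∫ t in (0:ℝ)..x, y t)) (Icc 0 l) := by
    refine antitoneOn_of_deriv_nonpos (convex_Icc _ _) (hf.mul hIc.continuousOn) ?_ ?_
    · rw [interior_Icc]
      exact fun x hx => (hD x hx).differentiableAt.differentiableWithinAt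
    · rw [interior_Icc]
      intro x hx
      rw [(hD x hx).deriv]
      have h1 := hle x hx
      have h2 : f' x * Real.exp (∫ t in (0:ℝ)..x, y t) +
        f x * (Real.exp (∫ t in (0:ℝ)..x, y t) * y x) =
        (f' x + y x * f x) * Real.exp (∫ t in (0:ℝ)..x, y t) := by ring
      rw [h2]
      exact mul_nonpos_of_nonpos_of_nonneg (by linarith) (Real.exp_pos _).le
  have := hanti (left_mem_Icc.2 (hx.1.trans hx.2)) hx hx.1
  simpa using this

lemma gronwall_nonpos {f f' y : ℝ → ℝ} {l : ℝ} (hf : ContinuousOn f (Icc 0 l)) (hy : Continuous y)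
    (hd : ∀ x ∈ Ioo 0 l, HasDerivAt f (f' x) x)
    (hle : ∀ x ∈ Ioo 0 l, f' x ≤ - (y x) * f x) (h0 : f 0 ≤ 0) {x : ℝ} (hx : x ∈ Icc 0 l) :
    f x ≤ 0 := by
  have h1 := gronwall_lin hf hy hd hle hx
  by_contra h
  have := mul_pos (not_le.1 h) (Real.exp_pos (∫ t in (0:ℝ)..x, y t))
  linarith

lemma gronwall_neg {f f' y : ℝ → ℝ} {l : ℝ} (hf : ContinuousOn f (Icc 0 l)) (hy : Continuous y)
    (hd : ∀ x ∈ Ioo 0 l, HasDerivAt f (f' x) x)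
    (hle : ∀ x ∈ Ioo 0 l, f' x ≤ - (y x) * f x) (h0 : f 0 < 0) {x : ℝ} (hx : x ∈ Icc 0 l) :
    f x < 0 := by
  have h1 := gronwall_lin hf hy hd hle hx
  by_contra h
  have := mul_nonneg (not_lt.1 h) (Real.exp_pos (∫ t in (0:ℝ)..x, y t)).le
  linarith

/-- Comparison of the finite volume stationary profile `w' = κ - w²` with the half-line profile
`z' = a² - z²` issued from the same boundary value. The flux excess `κ - a²` is nonnegative and at
most of order `1/l`, and the difference `w - z` is controlled by `κ - a²` times the supersolution
`q = (|w₋| + z)/(a² - w₋²)` of the linearised equation `q' + 2 z q ≥ 1`. -/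
lemma riccati_compare {a wm κ l : ℝ} (hwm : |wm| < a) (hl : 0 < l) {w z : ℝ → ℝ}
    (hw : Continuous w) (hw0 : w 0 = wm) (hwl : w l = a)
    (hwd : ∀ x ∈ Ioo 0 l, HasDerivAt w (κ - w x ^ 2) x)
    (hzd : ∀ x, HasDerivAt z (a ^ 2 - z x ^ 2) x) (hz0 : z 0 = wm) (hza : ∀ x, z x < a)
    {x : ℝ} (hx : x ∈ Icc 0 l) :
    z x ≤ w x ∧ w x ≤ a ∧
      w x - z x ≤ (2 * a * (a - wm) / (a ^ 2 - wm ^ 2)) / l := by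
  have ha : 0 < a := (abs_nonneg _).trans_lt hwm
  obtain ⟨hwm1, hwm2⟩ := abs_lt.1 hwm
  have hz : Continuous z := continuous_iff_continuousAt.2 fun x => (hzd x).continuousAt
  have hpos : 0 < a ^ 2 - wm ^ 2 := by nlinarith
  have h0l : (0:ℝ) ∈ Icc 0 l := ⟨le_rfl, hl.le⟩
  have hll : l ∈ Icc 0 l := ⟨hl.le, le_rfl⟩
  have hκ : a ^ 2 < κ := by
    by_contra hcon
    have := gronwall_neg (f := fun x => w x - a) (f' := fun x => κ - w x ^ 2)
      (y := fun x => w x + a) (hw.sub continuous_const).continuousOn (hw.add continuous_const)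
      (fun x hx => (hwd x hx).sub_const a) (fun x hx => by nlinarith [not_lt.1 hcon])
      (by simp only [hw0]; linarith) hll
    simp only [hwl, sub_self, lt_irrefl] at this
  have hneg : ∀ x ∈ Icc 0 l, w x ^ 2 - κ < 0 := fun x hx =>
    gronwall_neg (f := fun x => w x ^ 2 - κ) (f' := fun x => 2 * w x * (κ - w x ^ 2))
      (y := fun x => 2 * w x) ((hw.pow 2).sub continuous_const).continuousOn
      (continuous_const.mul hw)
      (fun x hx => by simpa using ((hwd x hx).pow 2).sub_const κ)
      (fun x hx => by nlinarith)
      (by simp only [hw0]; nlinarith) hx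
  have hmono : StrictMonoOn w (Icc 0 l) := by
    refine strictMonoOn_of_deriv_pos (convex_Icc _ _) hw.continuousOn ?_
    rw [interior_Icc]
    intro x hx
    rw [(hwd x hx).deriv]
    linarith [hneg x ⟨hx.1.le, hx.2.le⟩]
  have hwa : ∀ x ∈ Icc 0 l, w x ≤ a := fun x hx => hwl ▸ hmono.monotoneOn hx hll hx.2
  have hwb : ∀ x ∈ Icc 0 l, wm ≤ w x := fun x hx => hw0 ▸ hmono.monotoneOn h0l hx hx.1
  have hη : (κ - a ^ 2) * l ≤ a - wm := by
    have := (convex_Icc 0 l).mul_sub_le_image_sub_of_le_deriv (f := w) (C := κ - a ^ 2)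
      hw.continuousOn (by
        rw [interior_Icc]
        exact fun x hx => (hwd x hx).differentiableAt.differentiableWithinAt) (by
        rw [interior_Icc]
        intro x hx
        rw [(hwd x hx).deriv]
        have h1 := hwa x ⟨hx.1.le, hx.2.le⟩
        have h2 := hwb x ⟨hx.1.le, hx.2.le⟩
        nlinarith) 0 h0l l hll hl.le
    rwa [hw0, hwl, sub_zero] at this
  have hzw : ∀ x ∈ Icc 0 l, z x ≤ w x := fun x hx => by
    have := gronwall_nonpos (f := fun x => z x - w x)
      (f' := fun x => (a ^ 2 - z x ^ 2) - (κ - w x ^ 2)) (y := fun x => z x + w x)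
      (hz.sub hw).continuousOn (hz.add hw)
      (fun x hx => (hzd x).sub (hwd x hx)) (fun x hx => by nlinarith)
      (by simp only [hw0, hz0, sub_self, le_refl]) hx
    linarith
  set η := κ - a ^ 2 with hηd
  have hη0 : 0 < η := by linarith
  have hq : w x - z x - η * ((|wm| + z x) / (a ^ 2 - wm ^ 2)) ≤ 0 := by
    refine gronwall_nonpos (f := fun x => w x - z x - η * ((|wm| + z x) / (a ^ 2 - wm ^ 2)))
      (f' := fun x => (κ - w x ^ 2) - (a ^ 2 - z x ^ 2) -
        η * ((a ^ 2 - z x ^ 2) / (a ^ 2 - wm ^ 2))) (y := fun x => 2 * z x)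
      (by fun_prop) (by fun_prop) (fun x hx => ?_) (fun x hx => ?_) ?_ hx
    · exact ((hwd x hx).sub (hzd x)).sub
        ((((hzd x).const_add |wm|).div_const _).const_mul η)
    · have h1 := hzw x ⟨hx.1.le, hx.2.le⟩
      have h2 : 1 ≤ (a ^ 2 - z x ^ 2) / (a ^ 2 - wm ^ 2) +
          2 * z x * ((|wm| + z x) / (a ^ 2 - wm ^ 2)) := by
        have : (a ^ 2 - z x ^ 2) / (a ^ 2 - wm ^ 2) +
          2 * z x * ((|wm| + z x) / (a ^ 2 - wm ^ 2)) =
          (a ^ 2 + z x ^ 2 + 2 * z x * |wm|) / (a ^ 2 - wm ^ 2) := by ring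
        rw [this, one_le_div hpos]
        nlinarith [sq_abs wm, sq_nonneg (z x + |wm|)]
      have h3 := mul_le_mul_of_nonneg_left h2 hη0.le
      nlinarith [sq_nonneg (w x - z x)]
    · simp only [hw0, hz0, sub_self, zero_sub, neg_nonpos]
      have : 0 ≤ |wm| + wm := by linarith [neg_abs_le wm]
      positivity
  refine ⟨hzw x hx, hwa x hx, ?_⟩
  have h1 : η ≤ (a - wm) / l := by rwa [le_div_iff₀ hl]
  have h2 : (|wm| + z x) / (a ^ 2 - wm ^ 2) ≤ 2 * a / (a ^ 2 - wm ^ 2) := by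
    gcongr; linarith [hza x]
  calc w x - z x ≤ η * ((|wm| + z x) / (a ^ 2 - wm ^ 2)) := by linarith
    _ ≤ η * (2 * a / (a ^ 2 - wm ^ 2)) := by gcongr
    _ ≤ (a - wm) / l * (2 * a / (a ^ 2 - wm ^ 2)) := by gcongr
    _ = _ := by ring

lemma hasDerivAt_wave (a x0 x : ℝ) :
    HasDerivAt (fun x => a * Real.tanh (a * (x - x0)))
      (a ^ 2 - (a * Real.tanh (a * (x - x0))) ^ 2) x := by
  have h1 : HasDerivAt (fun x : ℝ => a * (x - x0)) (a * 1) x :=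
    ((hasDerivAt_id' x).sub_const x0).const_mul a
  have hc := (Real.cosh_pos (a * (x - x0))).ne'
  have h2 := ((h1.sinh.fun_div h1.cosh hc).const_mul a)
  have h3 : (fun x => a * Real.tanh (a * (x - x0))) =
      fun x => a * (Real.sinh (a * (x - x0)) / Real.cosh (a * (x - x0))) := by
    ext y; rw [Real.tanh_eq_sinh_div_cosh]
  rw [h3]
  refine h2.congr_deriv ?_
  have h4 := Real.cosh_sq (a * (x - x0))
  rw [Real.tanh_eq_sinh_div_cosh]
  field_simp

theorem minimizers (um up : ℝ) (h1 : um < up) (h2 : up < 1)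
    (hsum : 1 < um + up) (Ub : ℝ → ℝ → ℝ)
    (H : ∀ l, 0 < l →
        ContinuousOn (Ub l) (Ici 0) ∧ Ub l 0 = um ∧ Ub l l = up ∧
        (∀ x, l ≤ x → Ub l x = up) ∧ (∀ x ∈ Ioo (0:ℝ) l, Ub l x ∈ Ioo (0:ℝ) 1) ∧
        (∃ J : ℝ, ∀ x ∈ Ioo (0:ℝ) l,
          HasDerivAt (Ub l) (Ub l x * (1 - Ub l x) - J) x)) :
      ∃ x0 : ℝ,
        (1/2 + |up - 1/2| * Real.tanh (|up - 1/2| * (0 - x0)) = um) ∧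
        ConvXplusFam Ub (fun l x => phiOf (Ub l x))
          (fun x => 1/2 + |up - 1/2| * Real.tanh (|up - 1/2| * (x - x0)))
          (fun x => phiOf (1/2 + |up - 1/2| * Real.tanh (|up - 1/2| * (x - x0)))) := by
  have ha : 0 < up - 1/2 := by linarith
  rw [abs_of_pos ha]
  set a := up - 1/2 with had
  set wm := um - 1/2 with hwmd
  have hwm : |wm| < a := abs_lt.2 ⟨by linarith, by linarith⟩
  obtain ⟨t, -, ht⟩ := Real.tanh_surjOn (show wm / a ∈ Ioo (-1:ℝ) 1 by
    obtain ⟨e1, e2⟩ := abs_lt.1 hwm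
    constructor
    · rw [lt_div_iff₀ ha]; linarith
    · rw [div_lt_one ha]; exact e2)
  have hx0 : a * Real.tanh (a * (0 - -(t / a))) = wm := by
    have : a * (0 - -(t / a)) = t := by field_simp; ring
    rw [this, ht]; field_simp
  refine ⟨-(t / a), by rw [hx0]; simp [hwmd], ?_⟩
  set z : ℝ → ℝ := fun x => a * Real.tanh (a * (x - -(t / a))) with hzdef
  have hzd : ∀ x, HasDerivAt z (a ^ 2 - z x ^ 2) x := fun x => hasDerivAt_wave a _ x
  have hza : ∀ x, z x < a := fun x => by
    have := mul_lt_mul_of_pos_left (Real.tanh_lt_one (a * (x - -(t / a)))) ha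
    simpa [hzdef] using this
  have hza' : ∀ x, -a < z x := fun x => by
    have := mul_lt_mul_of_pos_left (Real.neg_one_lt_tanh (a * (x - -(t / a)))) ha
    simp only [hzdef]; linarith
  have hzm : Monotone z := monotone_of_deriv_nonneg (fun x => (hzd x).differentiableAt) fun x => by
    rw [(hzd x).deriv]; nlinarith [hza x, hza' x]
  set K := 2 * a * (a - wm) / (a ^ 2 - wm ^ 2)
  -- the uniform comparison
  have hcmp : ∀ l, 0 < l → ∀ x, 0 ≤ x → 1/2 + z x ≤ Ub l x ∧ Ub l x ≤ up ∧
      Ub l x - (1/2 + z x) ≤ K / l := by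
    intro l hl
    obtain ⟨hc, hU0, hUl, hUe, -, J, hJ⟩ := H l hl
    have hmain : ∀ x ∈ Icc 0 l, 1/2 + z x ≤ Ub l x ∧ Ub l x ≤ up ∧
        Ub l x - (1/2 + z x) ≤ K / l := by
      intro x hx
      have h := riccati_compare (w := fun x => Ub l (max x 0) - 1/2) (z := z) (κ := 1/4 - J)
        hwm hl ?_ ?_ ?_ ?_ hzd hx0 hza hx
      · simp only [max_eq_left hx.1] at h
        exact ⟨by linarith [h.1], by linarith [h.2.1], by linarith [h.2.2]⟩
      · exact (hc.comp_continuous (by fun_prop) fun x => mem_Ici.2 (le_max_right _ _)).sub continuous_const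
      · simp [hU0, hwmd]
      · simp [max_eq_left hl.le, hUl, had]
      · intro y hy
        have h := (hJ y hy).sub_const (1/2)
        have e : (fun x => Ub l (max x 0) - 1/2) =ᶠ[𝓝 y] fun x => Ub l x - 1/2 := by
          filter_upwards [Ioi_mem_nhds hy.1] with s hs
          rw [max_eq_left (le_of_lt hs)]
        refine (h.congr_of_eventuallyEq e).congr_deriv ?_
        rw [max_eq_left hy.1.le]; ring
    intro x hx
    rcases le_total x l with hxl | hxl
    · exact hmain x ⟨hx, hxl⟩
    · have h := hmain l ⟨hl.le, le_rfl⟩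
      have hz1 := hzm hxl
      rw [hUl] at h
      rw [hUe x hxl]
      exact ⟨by linarith [hza x], le_rfl, by linarith [h.2.2]⟩
  have hz0 : ∀ x, 0 ≤ x → um ≤ 1/2 + z x := fun x hx => by
    have h := hzm hx
    have : z 0 = wm := hx0
    linarith
  have hK : Tendsto (fun l : ℝ => K / l) atTop (𝓝 0) := tendsto_const_nhds.div_atTop tendsto_id
  have hclose : ∀ δ > 0, ∀ᶠ l in atTop, ∀ x, 0 ≤ x → um ≤ Ub l x ∧ Ub l x ≤ up ∧
      |Ub l x - (1/2 + z x)| < δ := by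
    intro δ hδ
    filter_upwards [eventually_gt_atTop 0, hK.eventually (gt_mem_nhds hδ)] with l hl hlδ x hx
    obtain ⟨e1, e2, e3⟩ := hcmp l hl x hx
    refine ⟨(hz0 x hx).trans e1, e2, ?_⟩
    rw [abs_of_nonneg (by linarith)]; linarith
  constructor
  · intro f hf
    refine tendsto_integral_filter_of_dominated_convergence (fun x => |f x|) ?_ ?_ hf.abs ?_
    · filter_upwards [eventually_gt_atTop 0] with l hl
      exact (((H l hl).1.mono Ioi_subset_Ici_self).aestronglyMeasurable
        measurableSet_Ioi).mul hf.aestronglyMeasurable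
    · filter_upwards [hclose 1 one_pos] with l hl
      filter_upwards [ae_restrict_mem measurableSet_Ioi] with x hx
      obtain ⟨e1, e2, -⟩ := hl x (le_of_lt hx)
      rw [Real.norm_eq_abs, abs_mul]
      refine mul_le_of_le_one_left (abs_nonneg _) ?_
      rw [abs_of_nonneg (by linarith)]; linarith
    · filter_upwards [ae_restrict_mem measurableSet_Ioi] with x hx
      refine Tendsto.mul_const _ ?_
      rw [Metric.tendsto_nhds]
      intro ε hε
      filter_upwards [hclose ε hε] with l hl
      rw [Real.dist_eq]
      exact (hl x (le_of_lt hx)).2.2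
  · have hcont : ContinuousOn phiOf (Icc um up) := by
      unfold phiOf
      refine ContinuousOn.log (continuousOn_id.div (continuousOn_const.sub continuousOn_id) ?_) ?_
      · intro x hx; have := hx.2; change 1 - x ≠ 0; linarith
      · intro x hx
        have e1 := hx.2
        have e2 := hx.1
        exact (div_pos (a := x) (b := 1 - x) (by linarith) (by linarith)).ne'
    have huc := isCompact_Icc.uniformContinuousOn_of_continuous hcont
    rw [Metric.uniformContinuousOn_iff] at huc
    rw [Metric.tendstoUniformlyOn_iff]
    intro ε hε
    obtain ⟨δ, hδ, hδε⟩ := huc ε hε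
    filter_upwards [hclose δ hδ] with l hl x hx
    obtain ⟨e1, e2, e3⟩ := hl x hx
    refine hδε _ ⟨hz0 x hx, by linarith [hza x]⟩ _ ⟨e1, e2⟩ ?_
    rw [dist_comm, Real.dist_eq]; exact e3

/-- For `u₋ + u₊ > 1` the family `{G_ℓ⁺}_{ℓ>0}` is equi-coercive and
Γ-converges to `G⁺` as `ℓ → ∞`; in particular the minimizers `(ū_ℓ⁺, φ̄_ℓ⁺)` converge in `X⁺`
to the minimizer `(ū⁺, φ̄⁺)` of `G⁺`. -/
theorem stmt_9 (um up : ℝ) (h0 : 0 < um) (h1 : um < up) (h2 : up < 1)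
    (hsum : 1 < um + up) :
    -- equi-coercivity
    (∀ U Φ : ℝ → ℝ → ℝ,
      (∀ l, MemXplus um up (U l) (Φ l)) →
      Filter.limsup (fun l => Glplus um up l (U l) (Φ l)) atTop < (⊤ : EReal) →
      ∀ ln : ℕ → ℝ, Tendsto ln atTop atTop →
        ∃ σ : ℕ → ℕ, StrictMono σ ∧ ∃ u φ : ℝ → ℝ, MemXplus um up u φ ∧
          ConvXplus (fun n => U (ln (σ n))) (fun n => Φ (ln (σ n))) u φ) ∧
    -- Γ-liminf inequality
    (∀ u φ : ℝ → ℝ, MemXplus um up u φ →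
      ∀ U Φ : ℝ → ℝ → ℝ, (∀ l, MemXplus um up (U l) (Φ l)) →
        ConvXplusFam U Φ u φ →
        GEplus um up u φ ≤ Filter.liminf (fun l => Glplus um up l (U l) (Φ l)) atTop) ∧
    -- Γ-limsup inequality
    (∀ u φ : ℝ → ℝ, MemXplus um up u φ →
      ∃ U Φ : ℝ → ℝ → ℝ, (∀ l, MemXplus um up (U l) (Φ l)) ∧
        ConvXplusFam U Φ u φ ∧
        Filter.limsup (fun l => Glplus um up l (U l) (Φ l)) atTop ≤ GEplus um up u φ) ∧
    -- convergence of the minimizers (ū_ℓ⁺, φ̄_ℓ⁺) to (ū⁺, φ̄⁺)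
    (∀ Ub : ℝ → ℝ → ℝ,
      (∀ l, 0 < l →
        ContinuousOn (Ub l) (Ici 0) ∧ Ub l 0 = um ∧ Ub l l = up ∧
        (∀ x, l ≤ x → Ub l x = up) ∧ (∀ x ∈ Ioo (0:ℝ) l, Ub l x ∈ Ioo (0:ℝ) 1) ∧
        (∃ J : ℝ, ∀ x ∈ Ioo (0:ℝ) l,
          HasDerivAt (Ub l) (Ub l x * (1 - Ub l x) - J) x)) →
      ∃ x0 : ℝ,
        (1/2 + |up - 1/2| * Real.tanh (|up - 1/2| * (0 - x0)) = um) ∧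
        ConvXplusFam Ub (fun l x => phiOf (Ub l x))
          (fun x => 1/2 + |up - 1/2| * Real.tanh (|up - 1/2| * (x - x0)))
          (fun x => phiOf (1/2 + |up - 1/2| * Real.tanh (|up - 1/2| * (x - x0))))) := by
  exact ⟨fun U Φ hX hlim ln hln => equicoercive h0 h1 h2 hsum U Φ hX hlim ln hln,
    fun u φ hX U Φ hXl hconv => gamma_liminf h0 h1 h2 hsum hX hXl hconv,
    fun u φ hX => gamma_limsup h0 h1 h2 hsum hX,
    fun Ub H => minimizers um up h1 h2 hsum Ub H⟩

end
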